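/- Invariance of the Schur lattice under the integral form of U_q(ŝl₂): for i ∈ {0,1}, let ℒ_i ⊆ W_i be the ℤ[q,q^{−1}]-submodule spanned by the vectors s_λ e^{mα}e^{iα/2} (λ a partition, m ∈ ℤ). Then ℒ_i is invariant under all divided powers of the Chevalley generators: e₁^{(r)}(ℒ_i) ⊆ ℒ_i, f₁^{(r)}(ℒ_i) ⊆ ℒ_i, e₀^{(r)}(ℒ_i) ⊆ ℒ_i, and f₀^{(r)}(ℒ_i) ⊆ ℒ_i for all r ≥ 1, where e₁ := X₀^+, f₁ := X₀^−, e₀ := X₁^− ∘ q^{−∂}, f₀ := q^{∂} ∘ X_{−1}^+. -/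

import Mathlib

/-!
The lattice consists of all `∑ P_m e^{mα}` with `P_m ∈ ℤ[q^{±1}][h₁, h₂, …]`: Schur functions and
products of the `h_k` span the same `ℤ[q^{±1}]`-module, since the Jacobi–Trudi expansion is
unitriangular.

A current acts on a coefficient by a translation `p_n ↦ p_n + c_n uⁿ` with `u = z⁻¹`,
multiplication by a series `exp (∑ v_n p_n zⁿ / n)` and extraction of one coefficient. Moving the
translation of one factor past the series of another produces, in the translation variables,
`(z_j - z_i) (z_j - s z_i)` with `s = q^{∓2}`. The shift by `e^{±α}` changes the modes in such a
way that all variables enter an `r`-fold product with the same exponent, so this product is a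
single symmetric coefficient functional applied to `∏_{i<j} (z_j - z_i) (z_j - s z_i) · T_r P`,
where `T_r P` is the simultaneous translation of `P` in all variables.

Since `T_r P` is symmetric, `f ↦ (coefficient functional) (∏ (z_j - z_i) · T_r P · f)` is
alternating. On polynomials of degree less than `r` in each variable, such as
`∏ (z_j - s z_i)`, an alternating functional is determined by its value on the staircase monomial
`∏ z_i^i`. The universal ratio, found by evaluating the alternating sum at a geometric progression,
is a power of `q` times `[r]!`. What remains after division by `[r]!` is integral, because the
translations and the series preserve integrality.
-/

open MvPolynomial

noncomputable section

/-- The base field `F = ℚ(q)`. -/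
abbrev Fq : Type := RatFunc ℚ

/-- The indeterminate `q ∈ ℚ(q)`. -/
def qq : Fq := RatFunc.X

/-- `Λ_F = F[p₁,p₂,…]`, with the variable `X n` (for `n : ℕ+`) the power sum `p_n`. -/
abbrev LamF : Type := MvPolynomial ℕ+ Fq

/-- The power sum `p_n`. -/
def ppF (n : ℕ+) : LamF := X n

/-- The family `g` with generating function `∑_k g_k t^k = exp (∑_{n≥1} c n · p_n tⁿ/n)`,
characterized by `g 0 = 1` and the recursion obtained by differentiating:
`(k+1) · g (k+1) = ∑_{i=0}^{k} c (i+1) · p_{i+1} · g (k−i)`. -/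
def genFamF (c : ℕ → Fq) : ℕ → LamF
  | 0 => 1
  | (k+1) => (((k : Fq) + 1)⁻¹) •
      ∑ i ∈ Finset.range (k+1), c (i+1) • (ppF ⟨i+1, Nat.succ_pos i⟩ * genFamF c (k - i))
  decreasing_by exact Nat.lt_succ_of_le (Nat.sub_le k i)

/-- The complete homogeneous symmetric function `h_k`. -/
def hhF : ℕ → LamF := genFamF fun _ => 1

/-- The elementary symmetric function `e_k`. -/
def eeF : ℕ → LamF := genFamF fun n => (-1)^(n+1)

/-- `h` indexed by `ℤ` (zero in negative degrees). -/
def hZF (n : ℤ) : LamF := if 0 ≤ n then hhF n.toNat else 0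

/-- `e` indexed by `ℤ` (zero in negative degrees). -/
def eZF (n : ℤ) : LamF := if 0 ≤ n then eeF n.toNat else 0

/-- The creation coefficients of `X⁺(z)`:
`exp (∑ ((1+q^{2n})q^{−n}/n)·p_n·zⁿ) = ∑_k HpF k · z^k`. -/
def HpF : ℕ → LamF := genFamF fun n => (1 + qq ^ (2*n)) * (qq⁻¹) ^ n

/-- `HpF` indexed by `ℤ`. -/
def HZp (n : ℤ) : LamF := if 0 ≤ n then HpF n.toNat else 0

/-- The annihilation avatars for `X⁺(z)`: since
`(1+q^{2n})q^{−n}/n · a_n = q^{−n}·∂/∂p_n`, the coefficient of `z^{−j}` in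
`exp (−∑ ((1+q^{2n})q^{−n}/n)·a_n·z^{−n})` is `ApF j` with `p_i ↦ i·∂/∂p_i`
substituted, where `∑_k ApF k t^k = exp (−∑ q^{−n} p_n tⁿ/n)`. -/
def ApF : ℕ → LamF := genFamF fun n => -((qq⁻¹) ^ n)

/-- The creation coefficients of `X⁻(z)`:
`exp (−∑ ((1+q^{2n})/n)·p_n·zⁿ) = ∑_k HmF k · z^k`. -/
def HmF : ℕ → LamF := genFamF fun n => -(1 + qq ^ (2*n))

/-- `HmF` indexed by `ℤ`. -/
def HZm (n : ℤ) : LamF := if 0 ≤ n then HmF n.toNat else 0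

/-- The differential operator `∏_i (i·∂/∂p_i)^(α i)`. -/
def monOpF (α : ℕ+ →₀ ℕ) : Module.End Fq LamF :=
  ((α.support.sort (· ≤ ·)).map fun (i : ℕ+) =>
    (((i : ℕ) : Fq) • (pderiv i).toLinearMap) ^ (α i)).prod

/-- `f(∂) P`: substitute `p_i ↦ i·∂/∂p_i` in `f` and apply to `P`. -/
def DopF (f : LamF) (P : LamF) : LamF := ∑ α ∈ f.support, f.coeff α • monOpF α P

/-- Bound for the weighted degree of `P` (weight of `p_i` is `i`). -/
def wboundF (P : LamF) : ℕ := P.support.sup fun α => α.sum fun i k => (i : ℕ) * k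

/-- The level-one Fock space `W_i = Λ_F ⊗ F[ℤα]e^{iα/2}`, realized as `ℤ →₀ Λ_F`;
`Finsupp.single m P` represents `P·e^{mα}e^{iα/2}`. -/
abbrev W : Type := ℤ →₀ LamF

/-- The Drinfeld current component `X_n^+` on `W_i` (the parameter `i ∈ {0,1}` enters
through `z^∂ e^{mα}e^{iα/2} = z^{2m+i} e^{mα}e^{iα/2}`): the coefficient of `z^{−n−1}` in
`X⁺(z) = exp(∑((1+q^{2n})q^{−n}/n)a_{−n}zⁿ)·exp(−∑((1+q^{2n})q^{−n}/n)a_n z^{−n})·e^α z^∂`,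
i.e. `X_n^+(P·e^{mα}) = ∑_j HpF_{j−n−1−2m−i} · (ApF j)(∂) P · e^{(m+1)α}`
(only the finitely many `j ≤ wboundF P` contribute). -/
def Xp (i n : ℤ) (w : W) : W :=
  w.sum fun m P => Finsupp.single (m+1)
    (∑ j ∈ Finset.range (wboundF P + 1),
      HZp ((j : ℤ) - n - 1 - 2*m - i) * DopF (ApF j) P)

/-- The Drinfeld current component `X_n^-` on `W_i`: the coefficient of `z^{−n−1}` in
`X⁻(z) = exp(−∑((1+q^{2n})/n)a_{−n}zⁿ)·exp(∑((1+q^{2n})/n)a_n z^{−n})·e^{−α} z^{−∂}`,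
i.e. `X_n^-(P·e^{mα}) = ∑_j HmF_{j+2m+i−n−1} · h_j(∂) P · e^{(m−1)α}`
(here `(1+q^{2n})/n · a_n = ∂/∂p_n`, whose generating family is `h`). -/
def Xm (i n : ℤ) (w : W) : W :=
  w.sum fun m P => Finsupp.single (m-1)
    (∑ j ∈ Finset.range (wboundF P + 1),
      HZm ((j : ℤ) + 2*m + i - n - 1) * DopF (hhF j) P)

/-- The `q`-factorial `[r]! = ∏_{k=1}^r (q^k − q^{−k})/(q − q^{−1})`. -/
def qfact (r : ℕ) : Fq := ∏ k ∈ Finset.range r, (qq ^ (k+1) - (qq⁻¹) ^ (k+1)) / (qq - qq⁻¹)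

/-- The divided power `x^{(r)} = x^r / [r]!` of an operator on `W`. -/
def divpow (f : W → W) (r : ℕ) (w : W) : W := (qfact r)⁻¹ • (f^[r] w)

/-- Schur function of an integer tuple: `s_ρ = det (h_{ρ_i − i + j})`. -/
def schurF {l : ℕ} (ρ : Fin l → ℤ) : LamF :=
  (Matrix.of fun i j : Fin l => hZF (ρ i - (i.1 : ℤ) + (j.1 : ℤ))).det

/-- Dual Schur function of an integer tuple: `s_{ρ'} = det (e_{ρ_i − i + j})`. -/
def schurEF {l : ℕ} (ρ : Fin l → ℤ) : LamF :=
  (Matrix.of fun i j : Fin l => eZF (ρ i - (i.1 : ℤ) + (j.1 : ℤ))).det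

/-- `q^{±∂}`: `q^{ε∂}(P·e^{mα}e^{iα/2}) = q^{ε(2m+i)}·P·e^{mα}e^{iα/2}`. -/
def qd (i ε : ℤ) (w : W) : W := w.sum fun m P => Finsupp.single m (qq ^ (ε * (2*m + i)) • P)

/-- The Chevalley generator `e₁ = X₀⁺`. -/
def che1 (i : ℤ) : W → W := Xp i 0
/-- The Chevalley generator `f₁ = X₀⁻`. -/
def chf1 (i : ℤ) : W → W := Xm i 0
/-- The Chevalley generator `e₀ = X₁⁻ ∘ q^{−∂}`. -/
def che0 (i : ℤ) (w : W) : W := Xm i 1 (qd i (-1) w)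
/-- The Chevalley generator `f₀ = q^∂ ∘ X₋₁⁺`. -/
def chf0 (i : ℤ) (w : W) : W := qd i 1 (Xp i (-1) w)

/-- The `ℤ[q,q⁻¹]`-lattice `ℒ ⊆ W` spanned by the vectors `s_λ e^{mα}e^{iα/2}`
(`λ` a partition, `m ∈ ℤ`): equivalently, the additive subgroup generated by all
`q^k · s_λ e^{mα}e^{iα/2}` with `k ∈ ℤ`. -/
def SchurLattice : AddSubgroup W :=
  AddSubgroup.closure
    {w | ∃ (k m : ℤ) (l : ℕ) (lam : Fin l → ℕ), Antitone lam ∧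
      w = qq ^ k • Finsupp.single m (schurF fun a => (lam a : ℤ))}

/-! ### Power series with a given logarithmic derivative -/

section HasLogDeriv

variable {A B : Type*} [CommRing A] [CommRing B]

open scoped PowerSeries in
/-- `G = exp ∫ L`: the series `G` has constant coefficient `1` and logarithmic derivative `L`. -/
structure HasLogDeriv (G L : A⟦X⟧) : Prop where
  derivative_eq : d⁄dX A G = L * G
  constantCoeff_eq_one : PowerSeries.constantCoeff G = 1

namespace HasLogDeriv

open scoped PowerSeries

variable {G K L M : A⟦X⟧}

lemma congr_logDeriv (hG : HasLogDeriv G L) (h : L = M) : HasLogDeriv G M :=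
  h ▸ hG

lemma one : HasLogDeriv (1 : A⟦X⟧) 0 :=
  ⟨by simp, by simp⟩

lemma mul (hG : HasLogDeriv G L) (hK : HasLogDeriv K M) : HasLogDeriv (G * K) (L + M) where
  derivative_eq := by
    rw [Derivation.leibniz, hG.derivative_eq, hK.derivative_eq, smul_eq_mul, smul_eq_mul]
    ring
  constantCoeff_eq_one := by
    rw [_root_.map_mul, hG.constantCoeff_eq_one, hK.constantCoeff_eq_one, one_mul]

lemma of_mul_eq_one (hG : HasLogDeriv G L) (h : G * K = 1) : HasLogDeriv K (-L) where
  derivative_eq := by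
    have hD : K * (G * d⁄dX A K + K * (L * G)) = 0 := by
      rw [← hG.derivative_eq, ← smul_eq_mul G, ← smul_eq_mul K (d⁄dX A G), ← Derivation.leibniz,
        h, PowerSeries.derivative_one, mul_zero]
    linear_combination hD - (d⁄dX A K + L * K) * h
  constantCoeff_eq_one := by
    simpa [hG.constantCoeff_eq_one] using congrArg PowerSeries.constantCoeff h

lemma map (f : A →+* B) (hG : HasLogDeriv G L) :
    HasLogDeriv (PowerSeries.map f G) (PowerSeries.map f L) where
  derivative_eq := by
    rw [← _root_.map_mul, ← hG.derivative_eq]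
    ext n
    simp [PowerSeries.coeff_derivative]
  constantCoeff_eq_one := (congrArg f hG.constantCoeff_eq_one).trans (map_one f)

lemma rescale (a : A) (hG : HasLogDeriv G L) :
    HasLogDeriv (PowerSeries.rescale a G) (PowerSeries.C a * PowerSeries.rescale a L) where
  derivative_eq := by
    rw [mul_assoc, ← _root_.map_mul, ← hG.derivative_eq]
    ext n
    simp only [PowerSeries.coeff_derivative, PowerSeries.coeff_rescale, PowerSeries.coeff_C_mul]
    ring
  constantCoeff_eq_one := by
    rw [← PowerSeries.coeff_zero_eq_constantCoeff_apply, PowerSeries.coeff_rescale, pow_zero,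
      one_mul, PowerSeries.coeff_zero_eq_constantCoeff_apply, hG.constantCoeff_eq_one]

lemma unique [IsAddTorsionFree A] (hG : HasLogDeriv G L) (hK : HasLogDeriv K L) : G = K := by
  have hunit : K * K.invOfUnit 1 = 1 := K.mul_invOfUnit 1 hK.constantCoeff_eq_one
  have hquot : HasLogDeriv (G * K.invOfUnit 1) 0 := by
    simpa using hG.mul (hK.of_mul_eq_one hunit)
  have hone : G * K.invOfUnit 1 = 1 :=
    PowerSeries.derivative.ext (by simp [hquot.derivative_eq])
      (by simp [hquot.constantCoeff_eq_one])
  linear_combination K * hone - G * hunit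

lemma one_sub_C_mul_X (b : A) :
    HasLogDeriv (1 - PowerSeries.C b * PowerSeries.X) (PowerSeries.mk fun n => -b ^ (n + 1)) where
  derivative_eq := by
    ext n
    rw [mul_sub, mul_one, ← mul_assoc, map_sub, map_sub, map_sub, Derivation.leibniz]
    cases n with
    | zero => simp
    | succ n => simp [PowerSeries.coeff_succ_mul_X, pow_succ]
  constantCoeff_eq_one := by simp

lemma mk_pow (b : A) :
    HasLogDeriv (PowerSeries.mk fun n => b ^ n) (PowerSeries.mk fun n => b ^ (n + 1)) := by
  have hinv : (1 - PowerSeries.C b * PowerSeries.X) * PowerSeries.mk (fun n => b ^ n) = 1 := by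
    ext n
    rw [sub_mul, one_mul, mul_right_comm, map_sub]
    cases n with
    | zero => simp
    | succ n => simp [PowerSeries.coeff_succ_mul_X, PowerSeries.coeff_one, pow_succ']
  have hneg : (PowerSeries.mk fun n => b ^ (n + 1)) = -PowerSeries.mk fun n => -b ^ (n + 1) := by
    ext n
    simp
  exact hneg ▸ (one_sub_C_mul_X b).of_mul_eq_one hinv

end HasLogDeriv

end HasLogDeriv

/-! ### Power series indexed by the integers -/

section IntCoeff

variable {A B : Type*} [CommRing A] [CommRing B]

/-- The coefficient functional of `tⁿ` for an integer `n`, which is zero for `n < 0`. -/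
def intCoeff (n : ℤ) : PowerSeries A →ₗ[A] A := if 0 ≤ n then PowerSeries.coeff n.toNat else 0

lemma intCoeff_apply (n : ℤ) (G : PowerSeries A) :
    intCoeff n G = if 0 ≤ n then PowerSeries.coeff n.toNat G else 0 := by
  unfold intCoeff
  split_ifs <;> rfl

lemma intCoeff_natCast (n : ℕ) (G : PowerSeries A) : intCoeff n G = PowerSeries.coeff n G := by
  simp [intCoeff_apply]

lemma intCoeff_of_neg {n : ℤ} (hn : n < 0) (G : PowerSeries A) : intCoeff n G = 0 := by
  rw [intCoeff_apply, if_neg hn.not_ge]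

lemma intCoeff_mul_X (n : ℤ) (G : PowerSeries A) :
    intCoeff n (G * PowerSeries.X) = intCoeff (n - 1) G := by
  rcases lt_or_ge n 0 with hn | hn
  · rw [intCoeff_of_neg hn, intCoeff_of_neg (by omega)]
  · obtain ⟨n, rfl⟩ := Int.eq_ofNat_of_zero_le hn
    cases n with
    | zero => rw [intCoeff_natCast, intCoeff_of_neg (n := _ - 1) (by simp)]; simp
    | succ n =>
      rw [intCoeff_natCast, PowerSeries.coeff_succ_mul_X,
        show ((n + 1 : ℕ) : ℤ) - 1 = n by omega, intCoeff_natCast]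

lemma intCoeff_C_mul (n : ℤ) (a : A) (G : PowerSeries A) :
    intCoeff n (PowerSeries.C a * G) = a * intCoeff n G := by
  rw [← PowerSeries.smul_eq_C_mul, map_smul, smul_eq_mul]

lemma intCoeff_map (f : A →+* B) (n : ℤ) (G : PowerSeries A) :
    intCoeff n (PowerSeries.map f G) = f (intCoeff n G) := by
  simp only [intCoeff_apply, PowerSeries.coeff_map]
  split_ifs <;> simp

lemma mem_range_map_subtype_iff {S : Subring A} {G : PowerSeries A} :
    G ∈ (PowerSeries.map S.subtype).range ↔ ∀ n, PowerSeries.coeff n G ∈ S := by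
  refine ⟨?_, fun h => ⟨PowerSeries.mk fun n => ⟨_, h n⟩, by ext; simp⟩⟩
  rintro ⟨G, rfl⟩ n
  rw [PowerSeries.coeff_map]
  exact (PowerSeries.coeff n G).2

lemma intCoeff_mem {S : Subring A} {G : PowerSeries A}
    (hG : G ∈ (PowerSeries.map S.subtype).range) (n : ℤ) : intCoeff n G ∈ S := by
  rw [intCoeff_apply]
  split_ifs
  exacts [mem_range_map_subtype_iff.1 hG _, zero_mem S]

lemma rescale_mem_range_map_subtype {S : Subring A} {G : PowerSeries A}
    (hG : G ∈ (PowerSeries.map S.subtype).range) {a : A} (ha : a ∈ S) :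
    PowerSeries.rescale a G ∈ (PowerSeries.map S.subtype).range := by
  refine mem_range_map_subtype_iff.2 fun n => ?_
  rw [PowerSeries.coeff_rescale]
  exact mul_mem (pow_mem ha n) (mem_range_map_subtype_iff.1 hG n)

lemma mem_range_map_subtype_of_mul_eq_one {S : Subring A} {G K : PowerSeries A}
    (hG : G ∈ (PowerSeries.map S.subtype).range) (hG1 : PowerSeries.constantCoeff G = 1)
    (h : G * K = 1) : K ∈ (PowerSeries.map S.subtype).range := by
  obtain ⟨G, rfl⟩ := hG
  have hunit : G * G.invOfUnit 1 = 1 := G.mul_invOfUnit 1 (Subtype.coe_injective hG1)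
  refine ⟨G.invOfUnit 1, ?_⟩
  have himage := congrArg (PowerSeries.map S.subtype) hunit
  rw [map_mul, map_one] at himage
  linear_combination K * himage - PowerSeries.map S.subtype (G.invOfUnit 1) * h

end IntCoeff

/-! ### Differential operators and translations -/

section Derivations

variable {σ R A M : Type*} [CommRing R] [CommRing A] [Algebra R A] [AddCommGroup M] [Module A M]
  [Module R M]

lemma eventually_derivation_aeval_eq_sum (D : Derivation R A M) (x : σ → A)
    (P : MvPolynomial σ R) : ∀ᶠ s : Finset σ in Filter.atTop,
      D (aeval x P) = ∑ i ∈ s, aeval x (pderiv i P) • D (x i) := by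
  classical
  induction P using MvPolynomial.induction_on with
  | C a => simp
  | add P Q hP hQ =>
    filter_upwards [hP, hQ] with s hPs hQs
    simp only [map_add, hPs, hQs, add_smul, Finset.sum_add_distrib]
  | mul_X P n hP =>
    filter_upwards [hP, Filter.eventually_ge_atTop {n}] with s hPs hns
    have hX : ∑ i ∈ s, aeval x (if n = i then P else 0) • D (x i) = aeval x P • D (x n) := by
      rw [Finset.sum_eq_single_of_mem n (hns (Finset.mem_singleton_self n))]
      · simp
      · intro i _ hi
        simp [hi.symm]
    simp [Derivation.leibniz, hPs, Finset.sum_add_distrib, add_smul, pderiv_X, Pi.single_apply, hX,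
      Finset.smul_sum, mul_smul]

lemma pderiv_pderiv_comm (i j : σ) (P : MvPolynomial σ R) :
    pderiv i (pderiv j P) = pderiv j (pderiv i P) := by
  classical
  have hbracket : ⁅(pderiv i : Derivation R (MvPolynomial σ R) (MvPolynomial σ R)), pderiv j⁆ = 0 :=
    MvPolynomial.derivation_ext fun n => by
      rw [Derivation.commutator_apply, pderiv_X, pderiv_X]
      simp only [Pi.single_apply]
      split_ifs <;> simp
  have hP := congrArg (fun D : Derivation R (MvPolynomial σ R) (MvPolynomial σ R) => D P) hbracket
  simpa [Derivation.commutator_apply, sub_eq_zero] using hP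

end Derivations

/-- The operator `n·∂/∂p_n` on `Λ_F`. -/
def scaledPderiv (n : ℕ+) : Module.End Fq LamF := ((n : ℕ) : Fq) • (pderiv n).toLinearMap

lemma scaledPderiv_mul_comm (m n : ℕ+) :
    scaledPderiv m * scaledPderiv n = scaledPderiv n * scaledPderiv m := by
  refine LinearMap.ext fun P => ?_
  simp only [scaledPderiv, Module.End.mul_apply, LinearMap.smul_apply, Derivation.coeFn_coe,
    map_smul, pderiv_pderiv_comm m n P]
  rw [smul_comm]

open scoped IsMulCommutative in
/-- The operators `n·∂/∂p_n` generate a commutative subalgebra, on which symbols can be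
evaluated. -/
lemma exists_algHom_DopF : ∃ Φ : LamF →ₐ[Fq] Module.End Fq LamF,
    (∀ n, Φ (X n) = scaledPderiv n) ∧ ∀ f P, DopF f P = Φ f P := by
  have hcomm : ∀ a ∈ Set.range scaledPderiv, ∀ b ∈ Set.range scaledPderiv, a * b = b * a := by
    rintro _ ⟨m, rfl⟩ _ ⟨n, rfl⟩
    exact scaledPderiv_mul_comm m n
  let S := Algebra.adjoin Fq (Set.range scaledPderiv)
  have : IsMulCommutative S := Algebra.isMulCommutative_adjoin Fq hcomm
  let x : ℕ+ → S := fun n => ⟨scaledPderiv n, Algebra.subset_adjoin ⟨n, rfl⟩⟩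
  refine ⟨S.val.comp (aeval x), fun n => by simp [x], fun f P => ?_⟩
  have hmon (α : ℕ+ →₀ ℕ) : monOpF α = S.val (α.prod fun i k => x i ^ k) := by
    rw [Finsupp.prod, ← Finset.sort_toFinset (r := (· ≤ ·)) α.support,
      List.prod_toFinset _ (Finset.sort_nodup _ _), map_list_prod, List.map_map]
    rfl
  rw [AlgHom.comp_apply, aeval_def, eval₂_eq, DopF, map_sum, LinearMap.sum_apply]
  refine Finset.sum_congr rfl fun α _ => ?_
  rw [map_mul, AlgHom.commutes, Module.End.mul_apply, Module.algebraMap_end_apply, hmon,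
    Finsupp.prod]

section Translation

variable {k : Type*} [CommRing k]

/-- The translation `p_n ↦ p_n + c_n uⁿ`, that is `exp (∑ c_n uⁿ ∂/∂p_n)`. -/
def translation (c : ℕ → k) : MvPolynomial ℕ+ k →ₐ[k] Polynomial (MvPolynomial ℕ+ k) :=
  aeval fun n => Polynomial.C (X n) + Polynomial.C (C (c n)) * Polynomial.X ^ (n : ℕ)

lemma translation_X (c : ℕ → k) (n : ℕ+) : translation c (X n) =
    Polynomial.C (X n) + Polynomial.C (C (c n)) * Polynomial.X ^ (n : ℕ) := by
  simp [translation]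

lemma translation_C (c : ℕ → k) (a : k) : translation c (C a) = Polynomial.C (C a) :=
  (translation c).commutes a

lemma coeff_zero_translation (c : ℕ → k) (P : MvPolynomial ℕ+ k) :
    (translation c P).coeff 0 = P := by
  induction P using MvPolynomial.induction_on with
  | C a => rw [translation_C, Polynomial.coeff_C_zero]
  | add P Q hP hQ => simp [hP, hQ]
  | mul_X P n hP =>
    rw [map_mul, Polynomial.mul_coeff_zero, hP, translation_X]
    simp [Polynomial.coeff_X_pow, n.ne_zero.symm]

/-- The equation `d/du = ∑ c_n n uⁿ⁻¹ ∂/∂p_n` satisfied by the translation. -/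
lemma coeff_succ_translation (c : ℕ → k) (P : MvPolynomial ℕ+ k) (m : ℕ) :
    (m + 1) * (translation c P).coeff (m + 1) = ∑ i ∈ Finset.range (m + 1),
      C (c (i + 1) * (i + 1)) * (translation c (pderiv i.succPNat P)).coeff (m - i) := by
  classical
  let x (n : ℕ+) : Polynomial (MvPolynomial ℕ+ k) :=
    Polynomial.C (X n) + Polynomial.C (C (c n)) * Polynomial.X ^ (n : ℕ)
  let small : Finset ℕ+ := (Finset.range (m + 1)).image Nat.succPNat
  have hcoeff (n : ℕ+) : (translation c (pderiv n P) * Polynomial.derivative (x n)).coeff m =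
      if (n : ℕ) - 1 ≤ m then
        C (c n * n) * (translation c (pderiv n P)).coeff (m - (n - 1)) else 0 := by
    have hx : translation c (pderiv n P) * Polynomial.derivative (x n) =
        Polynomial.C (C (c n * n)) * translation c (pderiv n P) *
          Polynomial.X ^ ((n : ℕ) - 1) := by
      simp [x, Polynomial.derivative_X_pow]
      ring
    rw [hx, Polynomial.coeff_mul_X_pow', Polynomial.coeff_C_mul]
  obtain ⟨s, hs, hsmall⟩ := ((eventually_derivation_aeval_eq_sum
    (Polynomial.derivative'.restrictScalars k) x P).and
    (Filter.eventually_ge_atTop small)).exists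
  have hderiv : Polynomial.derivative (translation c P) =
      ∑ n ∈ s, translation c (pderiv n P) * Polynomial.derivative (x n) := hs
  rw [mul_comm, ← Polynomial.coeff_derivative, hderiv, Polynomial.finsetSum_coeff,
    ← Finset.sum_subset hsmall, Finset.sum_image (Nat.succPNat_injective.injOn)]
  · refine Finset.sum_congr rfl fun i hi => ?_
    rw [hcoeff, if_pos (by simpa using Finset.mem_range_succ_iff.1 hi)]
    simp
  · intro n _ hn
    rw [hcoeff, if_neg]
    refine fun hle => hn (Finset.mem_image.2 ⟨n.natPred, ?_, PNat.succPNat_natPred n⟩)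
    exact Finset.mem_range_succ_iff.2 hle

end Translation

lemma natDegree_translation_le (c : ℕ → Fq) (P : LamF) :
    (translation c P).natDegree ≤ wboundF P := by
  conv_lhs => rw [P.as_sum, map_sum]
  refine Polynomial.natDegree_sum_le_of_forall_le _ _ fun α hα => ?_
  refine le_trans ?_ (Finset.le_sup (f := fun α : ℕ+ →₀ ℕ => α.sum fun i k => (i : ℕ) * k) hα)
  rw [monomial_eq, map_mul, translation_C, Finsupp.prod, map_prod]
  refine (Polynomial.natDegree_C_mul_le _ _).trans ((Polynomial.natDegree_prod_le _ _).trans ?_)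
  refine Finset.sum_le_sum fun i _ => ?_
  rw [map_pow, translation_X]
  refine Polynomial.natDegree_pow_le.trans ((Nat.mul_comm _ _).le.trans ?_)
  refine Nat.mul_le_mul_right _ ((Polynomial.natDegree_add_le _ _).trans (max_le (by simp) ?_))
  exact (Polynomial.natDegree_C_mul_le _ _).trans (by simp)

/-! ### The exponential families -/

/-- The series `exp (∑ c_n p_n tⁿ / n)`. -/
def expSeries (c : ℕ → Fq) : PowerSeries LamF := PowerSeries.mk (genFamF c)

/-- The logarithmic derivative `∑ c_{n+1} p_{n+1} tⁿ` of `expSeries c`. -/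
def logDerivSeries (c : ℕ → Fq) : PowerSeries LamF :=
  PowerSeries.mk fun n => C (c (n + 1)) * X n.succPNat

lemma coeff_expSeries (c : ℕ → Fq) (k : ℕ) : PowerSeries.coeff k (expSeries c) = genFamF c k :=
  PowerSeries.coeff_mk _ _

lemma succ_smul_genFamF_succ (c : ℕ → Fq) (k : ℕ) : ((k : Fq) + 1) • genFamF c (k + 1) =
    ∑ i ∈ Finset.range (k + 1), c (i + 1) • (ppF i.succPNat * genFamF c (k - i)) := by
  rw [genFamF, smul_inv_smul₀ (Nat.cast_add_one_ne_zero k)]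
  rfl

lemma hasLogDeriv_expSeries (c : ℕ → Fq) : HasLogDeriv (expSeries c) (logDerivSeries c) where
  derivative_eq := by
    ext1 n
    rw [PowerSeries.coeff_derivative, PowerSeries.coeff_mul,
      Finset.Nat.sum_antidiagonal_eq_sum_range_succ_mk]
    simp only [coeff_expSeries, logDerivSeries, PowerSeries.coeff_mk,
      ← MvPolynomial.smul_eq_C_mul, smul_mul_assoc]
    refine Eq.trans ?_ (succ_smul_genFamF_succ c n)
    rw [Algebra.smul_def, mul_comm]
    simp
  constantCoeff_eq_one := by
    rw [← PowerSeries.coeff_zero_eq_constantCoeff_apply, coeff_expSeries, genFamF]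

lemma expSeries_mul (c d : ℕ → Fq) :
    expSeries c * expSeries d = expSeries fun n => c n + d n := by
  have hlog : logDerivSeries (fun n => c n + d n) = logDerivSeries c + logDerivSeries d := by
    ext1 n
    simp [logDerivSeries, add_mul]
  have hprod := (hasLogDeriv_expSeries c).mul (hasLogDeriv_expSeries d)
  exact hprod.unique (hlog ▸ hasLogDeriv_expSeries _)

lemma expSeries_zero : expSeries (fun _ => 0) = 1 := by
  have hlog : logDerivSeries (fun _ => 0) = 0 := by
    ext1 n
    simp [logDerivSeries]
  exact (hlog ▸ hasLogDeriv_expSeries fun _ => 0).unique HasLogDeriv.one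

lemma rescale_expSeries (c : ℕ → Fq) (a : Fq) :
    PowerSeries.rescale (C a) (expSeries c) = expSeries fun n => c n * a ^ n := by
  have hlog : logDerivSeries (fun n => c n * a ^ n) =
      PowerSeries.C (C a) * PowerSeries.rescale (C a) (logDerivSeries c) := by
    ext1 n
    simp only [logDerivSeries, PowerSeries.coeff_C_mul, PowerSeries.coeff_rescale,
      PowerSeries.coeff_mk, map_mul, map_pow]
    ring
  exact ((hasLogDeriv_expSeries c).rescale (C a)).unique (hlog ▸ hasLogDeriv_expSeries _)

/-- Translation by `c` shifts the logarithm of `expSeries v` by `∑ v_n c_n (u t)ⁿ / n`. -/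
lemma map_translation_expSeries (c v : ℕ → Fq) {K : PowerSeries (Polynomial LamF)}
    (hK : HasLogDeriv K (PowerSeries.mk fun n =>
      Polynomial.C (C (v (n + 1) * c (n + 1))) * Polynomial.X ^ (n + 1))) :
    PowerSeries.map (translation c : LamF →+* Polynomial LamF) (expSeries v) =
      PowerSeries.map Polynomial.C (expSeries v) * K := by
  have hlog : PowerSeries.map (translation c : LamF →+* Polynomial LamF) (logDerivSeries v) =
      PowerSeries.map Polynomial.C (logDerivSeries v) + PowerSeries.mk fun n =>
        Polynomial.C (C (v (n + 1) * c (n + 1))) * Polynomial.X ^ (n + 1) := by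
    ext1 n
    simp only [logDerivSeries, PowerSeries.coeff_map, PowerSeries.coeff_mk, map_add, map_mul,
      RingHom.coe_coe, translation_C, translation_X, Nat.succPNat_coe, Nat.succ_eq_add_one]
    ring
  have hexp := hasLogDeriv_expSeries v
  exact (hexp.map _).unique (hlog ▸ (hexp.map Polynomial.C).mul hK)

/-- Taylor's formula: both sides satisfy the same recursion in `j`. -/
lemma DopF_genFamF (c : ℕ → Fq) (j : ℕ) (P : LamF) :
    DopF (genFamF c j) P = (translation c P).coeff j := by
  obtain ⟨Φ, hΦX, hΦ⟩ := exists_algHom_DopF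
  rw [hΦ]
  induction j using Nat.strong_induction_on generalizing P with
  | _ j ih =>
    cases j with
    | zero => simp [genFamF, coeff_zero_translation]
    | succ m =>
      have hm : (m : Fq) + 1 ≠ 0 := Nat.cast_add_one_ne_zero m
      refine smul_right_injective LamF hm ?_
      have hsmul (Q : LamF) : ((m : Fq) + 1) • Q = (m + 1) * Q := by
        simp [MvPolynomial.smul_eq_C_mul]
      simp only
      rw [← LinearMap.smul_apply, ← map_smul, succ_smul_genFamF_succ, map_sum,
        LinearMap.sum_apply, hsmul, coeff_succ_translation]
      refine Finset.sum_congr rfl fun i _ => ?_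
      rw [map_smul, mul_comm (ppF _), map_mul, ppF, hΦX, LinearMap.smul_apply,
        Module.End.mul_apply, ih (m - i) (by omega)]
      rw [scaledPderiv, LinearMap.smul_apply, map_smul, Polynomial.coeff_smul, smul_smul,
        MvPolynomial.smul_eq_C_mul, Nat.succPNat_coe, Nat.succ_eq_add_one, Nat.cast_succ]
      rfl

/-! ### Umbral functionals -/

section Umbral

variable {σ R : Type*} [CommRing R] (V : ℤ → R)

/-- The umbral functional `R[u] → R`, `uʲ ↦ V (k + j)`. -/
def umbral (k : ℤ) : Polynomial R →ₗ[R] R :=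
  Polynomial.lsum fun j => LinearMap.toSpanSingleton R R (V (k + j))

lemma umbral_apply (k : ℤ) (H : Polynomial R) : umbral V k H = H.sum fun j a => a * V (k + j) := by
  simp [umbral, Polynomial.lsum_apply]

lemma umbral_monomial (k : ℤ) (j : ℕ) (a : R) :
    umbral V k (Polynomial.monomial j a) = a * V (k + j) := by
  rw [umbral_apply, Polynomial.sum_monomial_index a _ (zero_mul _)]

variable [Fintype σ]

/-- The umbral functional `R[z_i] → R`, `∏ z_i ^ j_i ↦ ∏ V (a_i + j_i)`. -/
def mvUmbral (a : σ → ℤ) : MvPolynomial σ R →ₗ[R] R :=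
  (basisMonomials σ R).constr R fun j => ∏ i, V (a i + j i)

lemma mvUmbral_monomial (a : σ → ℤ) (j : σ →₀ ℕ) (c : R) :
    mvUmbral V a (monomial j c) = c * ∏ i, V (a i + j i) := by
  have hbasis : monomial j c = c • basisMonomials σ R j := by
    rw [coe_basisMonomials, smul_monomial, smul_eq_mul, mul_one]
  rw [hbasis, map_smul, mvUmbral, Module.Basis.constr_basis, smul_eq_mul]

lemma mvUmbral_monomial_mul (a : σ → ℤ) (e : σ →₀ ℕ) (G : MvPolynomial σ R) :
    mvUmbral V a (monomial e 1 * G) = mvUmbral V (fun i => a i + e i) G := by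
  induction G using MvPolynomial.induction_on' with
  | monomial j c =>
    rw [monomial_mul, one_mul, mvUmbral_monomial, mvUmbral_monomial]
    simp [add_assoc]
  | add G H hG hH => rw [mul_add, map_add, map_add, hG, hH]

lemma mvUmbral_rename (a : σ → ℤ) (τ : Equiv.Perm σ) (G : MvPolynomial σ R) :
    mvUmbral V a (rename τ G) = mvUmbral V (a ∘ τ) G := by
  induction G using MvPolynomial.induction_on' with
  | monomial j c =>
    rw [rename_monomial, mvUmbral_monomial, mvUmbral_monomial, ← Equiv.prod_comp τ]
    simp only [Finsupp.mapDomain_apply τ.injective, Function.comp_apply]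
  | add G H hG hH => rw [map_add, map_add, map_add, hG, hH]

lemma mvUmbral_mem {V : ℤ → R} {S : Subring R} (hV : ∀ k, V k ∈ S) (a : σ → ℤ)
    {G : MvPolynomial σ R} (hG : G ∈ (MvPolynomial.map (σ := σ) S.subtype).range) :
    mvUmbral V a G ∈ S := by
  obtain ⟨G, rfl⟩ := hG
  induction G using MvPolynomial.induction_on' with
  | monomial j c =>
    rw [map_monomial, mvUmbral_monomial]
    exact mul_mem c.2 (prod_mem fun i _ => hV _)
  | add G H hG hH =>
    rw [map_add, map_add]
    exact add_mem hG hH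

end Umbral

section UmbralCons

variable {R : Type*} [CommRing R] {r : ℕ}

lemma monomial_cons (n : ℕ) (e : Fin r →₀ ℕ) :
    (monomial (Finsupp.cons n e) 1 : MvPolynomial (Fin (r + 1)) R) =
      X 0 ^ n * ∏ i, X i.succ ^ e i := by
  rw [monomial_eq, C_1, one_mul, Finsupp.prod_fintype _ _ (by simp), Fin.prod_univ_succ]
  simp

lemma mvUmbral_cons (V : ℤ → R) (k : ℤ) (a : Fin r → ℤ) (H : Polynomial R) (e : Fin r → ℕ) :
    mvUmbral V (Fin.cons k a : Fin (r + 1) → ℤ) (Polynomial.aeval (X 0) H * ∏ i, X i.succ ^ e i) =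
      umbral V k H * ∏ i, V (a i + e i) := by
  induction H using Polynomial.induction_on' with
  | add G H hG hH => rw [map_add, add_mul, map_add, map_add, add_mul, hG, hH]
  | monomial n c =>
    have hmonomial : Polynomial.aeval (X 0) (Polynomial.monomial n c) * ∏ i, X i.succ ^ e i =
        c • monomial (Finsupp.cons n (Finsupp.equivFunOnFinite.symm e)) (1 : R) := by
      rw [monomial_cons, Polynomial.aeval_monomial, MvPolynomial.smul_eq_C_mul,
        MvPolynomial.algebraMap_eq, mul_assoc]
      rfl
    rw [hmonomial, map_smul, mvUmbral_monomial, umbral_monomial, Fin.prod_univ_succ, smul_eq_mul]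
    simp only [Fin.cons_zero, Fin.cons_succ, Finsupp.cons_zero, Finsupp.cons_succ,
      Finsupp.equivFunOnFinite_symm_apply_apply, one_mul, mul_assoc]

end UmbralCons

/-! ### Normal ordering -/

section NormalOrdering

variable {k R : Type*} [CommRing k] [CommRing R] [Algebra k R]

/-- The exchange relation `T V(z) = (1 - u z) (1 - s u z) V(z)` of a translation `T : R → R[u]`
with the generating series `V(z) = ∑ V_b z^b`, where `T` fixes `s`. -/
structure HasContraction (T : R →ₐ[k] Polynomial R) (V : ℤ → R) (s : R) : Prop where
  map_scalar : T s = Polynomial.C s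
  map_coeff (b : ℤ) : T (V b) = Polynomial.C (V b) -
    Polynomial.C ((1 + s) * V (b - 1)) * Polynomial.X +
      Polynomial.C (s * V (b - 2)) * Polynomial.X ^ 2

/-- The mode `P ↦ ∑_j V (n + j) · [uʲ] (T P)` of the current `V(u) T`. -/
def mode (T : R →ₐ[k] Polynomial R) (V : ℤ → R) (n : ℤ) : R →ₗ[k] R :=
  (umbral V n).restrictScalars k ∘ₗ T.toLinearMap

lemma mode_apply (T : R →ₐ[k] Polynomial R) (V : ℤ → R) (n : ℤ) (P : R) :
    mode T V n P = umbral V n (T P) := rfl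

/-- The composite `mode (n - 2 (r - 1)) ∘ ⋯ ∘ mode (n - 2) ∘ mode n`. -/
def iterMode (T : R →ₐ[k] Polynomial R) (V : ℤ → R) (n : ℤ) : ℕ → R →ₗ[k] R
  | 0 => LinearMap.id
  | r + 1 => mode T V (n - 2 * r) ∘ₗ iterMode T V n r

/-- Applies `T`, with new variable `z₀`, to the coefficients of a polynomial in `z₁, …, z_r`. -/
def liftCoeffs (T : R →ₐ[k] Polynomial R) (r : ℕ) :
    MvPolynomial (Fin r) R →ₐ[k] MvPolynomial (Fin (r + 1)) R :=
  aevalTower (((Polynomial.aeval (X 0)).restrictScalars k).comp T) fun i => X i.succ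

lemma liftCoeffs_C (T : R →ₐ[k] Polynomial R) (r : ℕ) (a : R) :
    liftCoeffs T r (C a) = Polynomial.aeval (X 0) (T a) := by
  simp [liftCoeffs]

lemma liftCoeffs_X (T : R →ₐ[k] Polynomial R) (r : ℕ) (i : Fin r) :
    liftCoeffs T r (X i) = X i.succ := by
  simp [liftCoeffs]

lemma liftCoeffs_monomial (T : R →ₐ[k] Polynomial R) (r : ℕ) (j : Fin r →₀ ℕ) (a : R) :
    liftCoeffs T r (monomial j a) = Polynomial.aeval (X 0) (T a) * ∏ i, X i.succ ^ j i := by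
  rw [monomial_eq, map_mul, liftCoeffs_C, Finsupp.prod_fintype _ _ (by simp), map_prod]
  simp only [map_pow, liftCoeffs_X]

/-- The joint translation `R → R[z₁, …, z_r]` by `r` copies of `T`. -/
def iterTranslation (T : R →ₐ[k] Polynomial R) : ∀ r, R →ₐ[k] MvPolynomial (Fin r) R
  | 0 => IsScalarTower.toAlgHom k R _
  | r + 1 => (liftCoeffs T r).comp (iterTranslation T r)

/-- The factor `(z_j - z_i) (z_j - s z_i)` produced by exchanging two currents. -/
def contraction {r : ℕ} (s : R) (i j : Fin r) : MvPolynomial (Fin r) R :=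
  (X j - X i) * (X j - C s * X i)

/-- The coefficients of `(z - u) (z - s u)` in powers of `z`. -/
def contractionCoeff (s : R) : Fin 3 → R := ![s, -(1 + s), 1]

lemma contraction_eq_sum {r : ℕ} (s : R) (i j : Fin r) : contraction s i j =
    ∑ e : Fin 3, C (contractionCoeff s e) * X i ^ (2 - e.1) * X j ^ e.1 := by
  simp only [Fin.sum_univ_three, contractionCoeff, contraction]
  simp
  ring

namespace HasContraction

variable {T : R →ₐ[k] Polynomial R} {V : ℤ → R} {s : R}

lemma map_coeff_eq_sum (h : HasContraction T V s) (b : ℤ) : T (V b) = ∑ e : Fin 3,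
    (contractionCoeff s e * V (b - 2 + (e.1 : ℕ))) • Polynomial.X ^ (2 - e.1) := by
  have hb : b - 2 + 1 = b - 1 := by ring
  rw [h.map_coeff, Fin.sum_univ_three]
  simp [contractionCoeff, hb, Polynomial.smul_eq_C_mul]
  ring

lemma liftCoeffs_contraction (h : HasContraction T V s) {r : ℕ} (i j : Fin r) :
    liftCoeffs T r (contraction s i j) = contraction s i.succ j.succ := by
  simp [contraction, liftCoeffs_X, liftCoeffs_C, h.map_scalar]

lemma umbral_mul_prod (h : HasContraction T V s) {r : ℕ} (n : ℤ) (b : Fin r → ℤ)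
    (H : Polynomial R) : umbral V n (H * ∏ i, T (V (b i))) =
      mvUmbral V (Fin.cons n fun i => b i - 2 : Fin (r + 1) → ℤ)
        (Polynomial.aeval (X 0) H * ∏ i : Fin r, contraction s 0 i.succ) := by
  simp only [contraction_eq_sum, h.map_coeff_eq_sum, Finset.prod_univ_sum, Finset.mul_sum, map_sum]
  refine Finset.sum_congr rfl fun e _ => ?_
  have hleft : H * ∏ i, (contractionCoeff s (e i) * V (b i - 2 + ((e i).1 : ℕ))) •
      (Polynomial.X : Polynomial R) ^ (2 - (e i).1) =
        ((∏ i, contractionCoeff s (e i)) * ∏ i, V (b i - 2 + ((e i).1 : ℕ))) •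
          (H * Polynomial.X ^ ∑ i, (2 - (e i).1)) := by
    simp only [Polynomial.smul_eq_C_mul]
    rw [Finset.prod_mul_distrib, Finset.prod_pow_eq_pow_sum, ← map_prod, Finset.prod_mul_distrib]
    ring
  have hright : Polynomial.aeval (X 0) H * ∏ i : Fin r, (C (contractionCoeff s (e i)) *
      X 0 ^ (2 - (e i).1) * X i.succ ^ (e i).1) = (∏ i, contractionCoeff s (e i)) •
        (Polynomial.aeval (X 0) (H * Polynomial.X ^ ∑ i, (2 - (e i).1)) *
          ∏ i, (X i.succ : MvPolynomial (Fin (r + 1)) R) ^ (e i).1) := by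
    rw [MvPolynomial.smul_eq_C_mul, map_prod, map_mul, map_pow, Polynomial.aeval_X,
      Finset.prod_mul_distrib, Finset.prod_mul_distrib, Finset.prod_pow_eq_pow_sum]
    ring
  rw [hleft, hright, map_smul, map_smul, mvUmbral_cons, smul_eq_mul, smul_eq_mul]
  ring

/-- Moving one more current to the left of a normally ordered product. -/
lemma mode_mvUmbral (h : HasContraction T V s) {r : ℕ} (n : ℤ) (a : Fin r → ℤ)
    (G : MvPolynomial (Fin r) R) : mode T V n (mvUmbral V a G) =
      mvUmbral V (Fin.cons n fun i => a i - 2 : Fin (r + 1) → ℤ)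
        ((∏ i : Fin r, contraction s 0 i.succ) * liftCoeffs T r G) := by
  induction G using MvPolynomial.induction_on' with
  | add G H hG hH => rw [map_add, map_add, map_add, mul_add, map_add, hG, hH]
  | monomial j c =>
    rw [mvUmbral_monomial, mode_apply, map_mul, map_prod, h.umbral_mul_prod, liftCoeffs_monomial]
    have hshift := mvUmbral_monomial_mul V (Fin.cons n fun i => a i - 2 : Fin (r + 1) → ℤ)
      (Finsupp.cons 0 j) (Polynomial.aeval (X 0) (T c) * ∏ i : Fin r, contraction s 0 i.succ)
    rw [monomial_cons, pow_zero, one_mul] at hshift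
    rw [mul_left_comm, ← mul_assoc, mul_comm _ (∏ i, X (Fin.succ i) ^ j i), hshift]
    congr 2
    funext i
    refine Fin.cases (by simp) (fun i => ?_) i
    simp only [Fin.cons_succ, Finsupp.cons_succ]
    ring

theorem iterMode_eq (h : HasContraction T V s) (n : ℤ) (r : ℕ) (P : R) :
    iterMode T V n r P = mvUmbral V (fun _ : Fin r => n - 2 * r + 2)
      ((∏ i : Fin r, ∏ j ∈ Finset.Ioi i, contraction s i j) * iterTranslation T r P) := by
  induction r with
  | zero =>
    have hC : iterTranslation T 0 P = monomial 0 P := rfl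
    rw [iterMode, LinearMap.id_apply, hC, Fin.prod_univ_zero, one_mul, mvUmbral_monomial]
    simp
  | succ r ih =>
    have hlift (i : Fin r) : liftCoeffs T r (∏ j ∈ Finset.Ioi i, contraction s i j) =
        ∏ j ∈ Finset.Ioi i.succ, contraction s i.succ j := by
      simp only [Fin.prod_Ioi_succ, map_prod, h.liftCoeffs_contraction]
    rw [iterMode, LinearMap.comp_apply, ih, h.mode_mvUmbral, map_mul (liftCoeffs T r),
      map_prod]
    simp only [hlift]
    rw [Fin.prod_univ_succ, Fin.prod_Ioi_zero, ← mul_assoc, iterTranslation, AlgHom.comp_apply]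
    congr 2
    funext i
    refine Fin.cases ?_ (fun i => ?_) i <;> simp <;> ring

end HasContraction

section Integrality

variable {T : R →ₐ[k] Polynomial R} {S : Subring R}

lemma aeval_mem_range_map_subtype {σ : Type*} {H : Polynomial R}
    (hH : H ∈ (Polynomial.mapRingHom S.subtype).range) (i : σ) :
    Polynomial.aeval (X i) H ∈ (MvPolynomial.map (σ := σ) S.subtype).range := by
  obtain ⟨H, rfl⟩ := hH
  refine ⟨Polynomial.aeval (X i) H, ?_⟩
  rw [Polynomial.aeval_def, Polynomial.aeval_def, Polynomial.hom_eval₂,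
    Polynomial.coe_mapRingHom, Polynomial.eval₂_map, map_X]
  congr 1
  ext1 x
  simp

lemma liftCoeffs_mem (hT : ∀ P ∈ S, T P ∈ (Polynomial.mapRingHom S.subtype).range) {r : ℕ}
    {G : MvPolynomial (Fin r) R} (hG : G ∈ (MvPolynomial.map (σ := Fin r) S.subtype).range) :
    liftCoeffs T r G ∈ (MvPolynomial.map (σ := Fin (r + 1)) S.subtype).range := by
  obtain ⟨G, rfl⟩ := hG
  induction G using MvPolynomial.induction_on with
  | C c =>
    rw [map_C, liftCoeffs_C]
    exact aeval_mem_range_map_subtype (hT _ c.2) 0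
  | add G H hG hH =>
    rw [map_add, map_add]
    exact add_mem hG hH
  | mul_X G i hG =>
    rw [map_mul, map_X, map_mul, liftCoeffs_X]
    exact mul_mem hG ⟨X i.succ, map_X _ _⟩

lemma iterTranslation_mem (hT : ∀ P ∈ S, T P ∈ (Polynomial.mapRingHom S.subtype).range) (r : ℕ)
    {P : R} (hP : P ∈ S) :
    iterTranslation T r P ∈ (MvPolynomial.map (σ := Fin r) S.subtype).range := by
  induction r with
  | zero => exact ⟨C ⟨P, hP⟩, map_C _ _⟩
  | succ r ih => exact liftCoeffs_mem hT ih

end Integrality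

end NormalOrdering

lemma iterTranslation_translation_X {k : Type*} [CommRing k] (c : ℕ → k) (r : ℕ) (n : ℕ+) :
    iterTranslation (translation c) r (X n) = C (X n) + ∑ i, C (C (c n)) * X i ^ (n : ℕ) := by
  induction r with
  | zero => simp [iterTranslation, MvPolynomial.algebraMap_eq]
  | succ r ih =>
    rw [iterTranslation, AlgHom.comp_apply, ih]
    simp only [map_add, map_sum, map_mul, map_pow, liftCoeffs_C, liftCoeffs_X, translation_X,
      translation_C, Polynomial.aeval_C, Polynomial.aeval_X, MvPolynomial.algebraMap_eq]
    rw [Fin.sum_univ_succ, add_assoc]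

lemma isSymmetric_iterTranslation {k : Type*} [CommRing k] (c : ℕ → k) (r : ℕ)
    (P : MvPolynomial ℕ+ k) : (iterTranslation (translation c) r P).IsSymmetric := by
  intro τ
  have hcomp : ((rename τ).restrictScalars k).comp (iterTranslation (translation c) r) =
      iterTranslation (translation c) r := by
    refine MvPolynomial.algHom_ext fun n => ?_
    rw [AlgHom.comp_apply, iterTranslation_translation_X]
    simp only [AlgHom.restrictScalars_apply, map_add, map_sum, map_mul, map_pow, rename_C, rename_X]
    rw [Equiv.sum_comp τ fun i => C (C (c n)) * X i ^ (n : ℕ)]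
  exact DFunLike.congr_fun hcomp P

/-! ### Alternating functionals -/

section Alternating

variable {R : Type*} [CommRing R] {r : ℕ}

/-- A functional on polynomials in `r` variables which is multiplied by the sign under
permutations of the variables. -/
def IsAlternating (Φ : MvPolynomial (Fin r) R →ₗ[R] R) : Prop :=
  ∀ (τ : Equiv.Perm (Fin r)) (f : MvPolynomial (Fin r) R),
    Φ (rename τ f) = ((Equiv.Perm.sign τ : ℤ) : R) * Φ f

/-- The staircase monomial `∏ z_i ^ i`. -/
def staircase (R : Type*) [CommRing R] (r : ℕ) : MvPolynomial (Fin r) R :=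
  monomial (Finsupp.equivFunOnFinite.symm fun i => i.1) 1

/-- The Vandermonde product `∏_{i<j} (z_j - z_i)`. -/
def vandermondeProd (R : Type*) [CommRing R] (r : ℕ) : MvPolynomial (Fin r) R :=
  ∏ i : Fin r, ∏ j ∈ Finset.Ioi i, (X j - X i)

/-- The quantum Vandermonde product `∏_{i<j} (z_j - s z_i)`. -/
def qVandermonde (r : ℕ) (s : R) : MvPolynomial (Fin r) R :=
  ∏ i : Fin r, ∏ j ∈ Finset.Ioi i, (X j - C s * X i)

lemma rename_vandermondeProd (τ : Equiv.Perm (Fin r)) :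
    rename τ (vandermondeProd R r) =
      C ((Equiv.Perm.sign τ : ℤ) : R) * vandermondeProd R r := by
  rw [vandermondeProd, ← Matrix.det_vandermonde, map_intCast, ← Matrix.det_permute,
    AlgHom.map_det]
  congr 1
  ext i j
  simp [Matrix.vandermonde]

lemma lt_of_mem_support_qVandermonde (s : R) {m : Fin r →₀ ℕ}
    (hm : m ∈ (qVandermonde r s).support) (l : Fin r) : m l < r := by
  have : Nontrivial R := ⟨_, _, mem_support_iff.1 hm⟩
  have hdegree : degreeOf l (qVandermonde r s) ≤
      ∑ i : Fin r, ∑ j ∈ Finset.Ioi i, ((if l = j then 1 else 0) + if l = i then 1 else 0) := by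
    refine (degreeOf_prod_le _ _ _).trans (Finset.sum_le_sum fun i _ => ?_)
    refine (degreeOf_prod_le _ _ _).trans (Finset.sum_le_sum fun j _ => ?_)
    refine (degreeOf_sub_le _ _ _).trans (max_le ?_ ?_)
    · exact (degreeOf_X l j).le.trans (Nat.le_add_right _ _)
    · exact (degreeOf_C_mul_le _ _ _).trans ((degreeOf_X l i).le.trans (Nat.le_add_left _ _))
  have hcount : ∑ i : Fin r, ∑ j ∈ Finset.Ioi i,
      ((if l = j then 1 else 0) + if l = i then 1 else 0) = l.1 + (r - 1 - l.1) := by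
    simp only [Finset.sum_add_distrib, Finset.sum_ite_eq, Finset.sum_const, smul_eq_mul, mul_ite,
      mul_one, mul_zero, Finset.mem_univ, if_true, Finset.mem_Ioi, Fin.card_Ioi]
    rw [← Finset.card_filter, Finset.filter_gt_eq_Iio, Fin.card_Iio]
  have hm_le := (monomial_le_degreeOf l hm).trans (hdegree.trans hcount.le)
  omega

section Monomials

variable [IsAddTorsionFree R]

lemma IsAlternating.monomial_eq_zero {Φ : MvPolynomial (Fin r) R →ₗ[R] R} (hΦ : IsAlternating Φ)
    {m : Fin r →₀ ℕ} (hm : ¬ Function.Injective m) : Φ (monomial m 1) = 0 := by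
  obtain ⟨i, j, hij, hne⟩ : ∃ i j, m i = m j ∧ i ≠ j := by
    simpa [Function.Injective] using hm
  have hinvariant : Finsupp.mapDomain (Equiv.swap i j) m = m := by
    ext l
    rw [Finsupp.mapDomain_equiv_apply, Equiv.symm_swap, Equiv.swap_apply_def]
    split_ifs with hi hj
    exacts [hi ▸ hij.symm, hj ▸ hij, rfl]
  have hsign := hΦ (Equiv.swap i j) (monomial m 1)
  rw [rename_monomial, hinvariant, Equiv.Perm.sign_swap hne] at hsign
  refine self_eq_neg.1 (hsign.trans ?_)
  simp

lemma IsAlternating.exists_monomial_eq (m : Fin r →₀ ℕ) (hm : ∀ i, m i < r) :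
    ∃ a : R, ∀ Φ : MvPolynomial (Fin r) R →ₗ[R] R, IsAlternating Φ →
      Φ (monomial m 1) = a * Φ (staircase R r) := by
  by_cases hinj : Function.Injective m
  · let g (i : Fin r) : Fin r := ⟨m i, hm i⟩
    have hg : Function.Injective g := fun i j hij => hinj (Fin.ext_iff.1 hij)
    let τ : Equiv.Perm (Fin r) := Equiv.ofBijective g (Finite.injective_iff_bijective.1 hg)
    refine ⟨((Equiv.Perm.sign τ.symm : ℤ) : R), fun Φ hΦ => ?_⟩
    rw [← hΦ, staircase, rename_monomial]
    congr 3
    ext i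
    rw [Finsupp.mapDomain_equiv_apply]
    rfl
  · exact ⟨0, fun Φ hΦ => by rw [hΦ.monomial_eq_zero hinj, zero_mul]⟩

/-- On polynomials of degree less than `r` in each of the `r` variables, alternating functionals
are determined by their value on the staircase monomial. -/
lemma IsAlternating.exists_eq (f : MvPolynomial (Fin r) R) (hf : ∀ m ∈ f.support, ∀ i, m i < r) :
    ∃ a : R, ∀ Φ : MvPolynomial (Fin r) R →ₗ[R] R, IsAlternating Φ →
      Φ f = a * Φ (staircase R r) := by
  choose! a ha using IsAlternating.exists_monomial_eq (R := R) (r := r)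
  refine ⟨∑ m ∈ f.support, f.coeff m * a m, fun Φ hΦ => ?_⟩
  conv_lhs => rw [f.as_sum]
  rw [map_sum, Finset.sum_mul]
  refine Finset.sum_congr rfl fun m hm => ?_
  have hsmul : monomial m (f.coeff m) = f.coeff m • monomial m (1 : R) := by
    rw [smul_monomial, smul_eq_mul, mul_one]
  rw [hsmul, map_smul, smul_eq_mul, ha m (hf m hm) Φ hΦ, mul_assoc]

end Monomials

/-- The functional `f ↦ ∑ sgn(τ) f(x_{τ 1}, …, x_{τ r})`. -/
def alternatingEval (x : Fin r → R) : MvPolynomial (Fin r) R →ₗ[R] R :=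
  ∑ τ : Equiv.Perm (Fin r), ((Equiv.Perm.sign τ : ℤ) : R) •
    (aeval (x ∘ τ) : MvPolynomial (Fin r) R →ₐ[R] R).toLinearMap

lemma alternatingEval_apply (x : Fin r → R) (f : MvPolynomial (Fin r) R) :
    alternatingEval x f = ∑ τ : Equiv.Perm (Fin r), ((Equiv.Perm.sign τ : ℤ) : R) *
      aeval (x ∘ τ) f := by
  simp [alternatingEval, LinearMap.sum_apply]

lemma isAlternating_alternatingEval (x : Fin r → R) : IsAlternating (alternatingEval x) := by
  intro τ f
  rw [alternatingEval_apply, alternatingEval_apply, Finset.mul_sum]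
  refine (Finset.sum_congr rfl fun π _ => ?_).trans (Equiv.sum_comp (Equiv.mulRight τ) _)
  rw [Equiv.coe_mulRight, aeval_rename, Equiv.Perm.sign_mul, ← mul_assoc, Units.val_mul,
    Int.cast_mul, mul_left_comm, ← Int.cast_mul (_ : ℤ) (_ : ℤ), ← Units.val_mul,
    Int.units_mul_self, Units.val_one, Int.cast_one, mul_one]
  rfl

lemma alternatingEval_staircase (x : Fin r → R) :
    alternatingEval x (staircase R r) = ∏ i : Fin r, ∏ j ∈ Finset.Ioi i, (x j - x i) := by
  rw [alternatingEval_apply, ← Matrix.det_vandermonde, Matrix.det_apply]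
  refine Finset.sum_congr rfl fun τ _ => ?_
  rw [staircase, aeval_monomial, Finsupp.prod_fintype _ _ (by simp)]
  simp [Matrix.vandermonde, Units.smul_def]

lemma exists_consecutive_descent {τ : Equiv.Perm (Fin r)} (hτ : τ ≠ 1) :
    ∃ i j : Fin r, i < j ∧ (τ i).1 = (τ j).1 + 1 := by
  by_contra! hcon
  have hmono : StrictMono (τ⁻¹ : Equiv.Perm (Fin r)) := by
    cases r with
    | zero => exact fun a => a.elim0
    | succ r =>
      refine Fin.strictMono_iff_lt_succ.2 fun a => lt_of_not_ge fun hle => ?_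
      refine hcon (τ⁻¹ a.succ) (τ⁻¹ a.castSucc) (lt_of_le_of_ne hle fun h => ?_) (by simp)
      exact Fin.castSucc_lt_succ.ne' (τ⁻¹.injective h)
  have hid : ⇑τ⁻¹ = id := (hmono.range_inj strictMono_id).1 (by simp)
  exact hτ (inv_eq_one.1 (Equiv.ext (congrFun hid)))

/-- At `x_i = t ^ i` with `t = s⁻¹`, a consecutive descent of a permutation makes a factor of the
product vanish, so that only the identity contributes. -/
lemma alternatingEval_qVandermonde {s t : R} (hst : s * t = 1) :
    alternatingEval (fun i : Fin r => t ^ i.1) (qVandermonde r s) =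
      ∏ i : Fin r, ∏ j ∈ Finset.Ioi i, (t ^ j.1 - s * t ^ i.1) := by
  rw [alternatingEval_apply, Finset.sum_eq_single 1]
  · simp [qVandermonde, map_prod]
  · intro τ _ hτ
    obtain ⟨i, j, hij, hdescent⟩ := exists_consecutive_descent hτ
    rw [qVandermonde, map_prod, Finset.prod_eq_zero (Finset.mem_univ i), mul_zero]
    rw [map_prod, Finset.prod_eq_zero (Finset.mem_Ioi.2 hij)]
    simp only [map_sub, map_mul, aeval_X, aeval_C, Function.comp_apply, Algebra.algebraMap_self,
      RingHom.id_apply, hdescent]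
    linear_combination -t ^ (τ j).1 * hst
  · simp

/-! ### Gaussian factorials -/

/-- The Gaussian factorial `∏_{j<r} (1 + s + ⋯ + s^j)`. -/
def gaussFactorial (s : R) (r : ℕ) : R :=
  ∏ j ∈ Finset.range r, ∑ l ∈ Finset.range (j + 1), s ^ l

lemma gaussFactorial_map {S : Type*} [CommRing S] (f : R →+* S) (s : R) (r : ℕ) :
    gaussFactorial (f s) r = f (gaussFactorial s r) := by
  simp [gaussFactorial]

lemma gaussFactorial_sq {K : Type*} [Field K] {x : K} (hx : x ≠ 0) (hx' : x - x⁻¹ ≠ 0) (r : ℕ) :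
    gaussFactorial (x ^ 2) r = x ^ (∑ j ∈ Finset.range r, j) *
      ∏ j ∈ Finset.range r, (x ^ (j + 1) - x⁻¹ ^ (j + 1)) / (x - x⁻¹) := by
  rw [gaussFactorial, ← Finset.prod_pow_eq_pow_sum, ← Finset.prod_mul_distrib]
  refine Finset.prod_congr rfl fun j _ => ?_
  have hpow : x ^ (j + 1) * x⁻¹ ^ (j + 1) = 1 := by rw [← mul_pow, mul_inv_cancel₀ hx, one_pow]
  refine mul_right_cancel₀ (mul_ne_zero hx hx') ?_
  calc (∑ i ∈ Finset.range (j + 1), (x ^ 2) ^ i) * (x * (x - x⁻¹))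
      = (x ^ 2) ^ (j + 1) - 1 := by
        rw [← geom_sum_mul (x ^ 2), mul_sub x, mul_inv_cancel₀ hx, sq]
    _ = x ^ (j + 1) * (x ^ (j + 1) - x⁻¹ ^ (j + 1)) := by rw [mul_sub, hpow, ← pow_mul']; ring
    _ = x ^ (j + 1) * (((x ^ (j + 1) - x⁻¹ ^ (j + 1)) / (x - x⁻¹)) * (x - x⁻¹)) := by
        rw [div_mul_cancel₀ _ hx']
    _ = _ := by ring

lemma prod_Ioi_eq_prod_range {M : Type*} [CommMonoid M] (f : ℕ → ℕ → M) :
    ∏ i : Fin r, ∏ j ∈ Finset.Ioi i, f i j =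
      ∏ j ∈ Finset.range r, ∏ i ∈ Finset.range j, f i j := by
  rw [Finset.prod_comm' (t' := Finset.univ) (s' := fun j => Finset.Iio j) (by simp),
    ← Fin.prod_univ_eq_prod_range]
  refine Finset.prod_congr rfl fun j _ => ?_
  rw [← Nat.Iio_eq_range, ← Fin.map_valEmbedding_Iio, Finset.prod_map]
  rfl

lemma prod_geom_sub_smul {s t : R} (hst : s * t = 1) (j : ℕ) :
    ∏ i ∈ Finset.range j, (t ^ j - s * t ^ i) =
      (∑ l ∈ Finset.range (j + 1), s ^ l) * ∏ i ∈ Finset.range j, (t ^ j - t ^ i) := by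
  cases j with
  | zero => simp
  | succ m =>
    have hshift (i : ℕ) : t ^ (m + 1) - s * t ^ (i + 1) = t ^ (m + 1) - t ^ i := by
      linear_combination -t ^ i * hst
    have hpow : s ^ (m + 1) * t ^ (m + 1) = 1 := by rw [← mul_pow, hst, one_pow]
    have hgeom := geom_sum_mul s (m + 2)
    rw [Finset.prod_range_succ', Finset.prod_range_succ]
    simp only [hshift]
    linear_combination (∏ i ∈ Finset.range m, (t ^ (m + 1) - t ^ i)) *
      (t ^ (m + 1) * hgeom + s * hpow + (∑ l ∈ Finset.range (m + 2), s ^ l) * -t ^ m * hst)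

/-- The values of an alternating functional on the quantum Vandermonde product and on the staircase
are proportional; the ratio is found by alternating evaluation at `1, t, t², …` with `t = s⁻¹`. -/
lemma IsAlternating.qVandermonde_eq [IsDomain R] [IsAddTorsionFree R] {s t : R} (hst : s * t = 1)
    (ht : Function.Injective fun n : ℕ => t ^ n) {Φ : MvPolynomial (Fin r) R →ₗ[R] R}
    (hΦ : IsAlternating Φ) : Φ (qVandermonde r s) = gaussFactorial s r * Φ (staircase R r) := by
  obtain ⟨a, ha⟩ := IsAlternating.exists_eq (qVandermonde r s) fun _ =>
    lt_of_mem_support_qVandermonde s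
  have heval := ha _ (isAlternating_alternatingEval fun i : Fin r => t ^ i.1)
  rw [alternatingEval_qVandermonde hst, alternatingEval_staircase,
    prod_Ioi_eq_prod_range fun i j => t ^ j - s * t ^ i,
    prod_Ioi_eq_prod_range fun i j => t ^ j - t ^ i] at heval
  simp only [prod_geom_sub_smul hst, Finset.prod_mul_distrib] at heval
  have hne : ∏ j ∈ Finset.range r, ∏ i ∈ Finset.range j, (t ^ j - t ^ i) ≠ 0 := by
    refine Finset.prod_ne_zero_iff.2 fun j _ => Finset.prod_ne_zero_iff.2 fun i hi => ?_
    exact sub_ne_zero.2 (ht.ne (Finset.mem_range.1 hi).ne')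
  rw [ha Φ hΦ, ← mul_right_cancel₀ hne heval, gaussFactorial]

end Alternating

/-! ### Divisibility of iterated modes -/

section Divisibility

variable {k R : Type*} [CommRing k] [CommRing R] [Algebra k R] {r : ℕ}

lemma isAlternating_mvUmbral_mul (V : ℤ → R) (n : ℤ) {G : MvPolynomial (Fin r) R}
    (hG : G.IsSymmetric) : IsAlternating ((mvUmbral V fun _ => n).comp
      (LinearMap.mulLeft R (vandermondeProd R r * G))) := by
  intro τ f
  have hrename : mvUmbral V (fun _ => n) (rename τ (vandermondeProd R r * G * f)) =
      mvUmbral V (fun _ => n) (vandermondeProd R r * G * f) := mvUmbral_rename V (fun _ => n) τ _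
  have hsign : ((Equiv.Perm.sign τ : ℤ) : R) * ((Equiv.Perm.sign τ : ℤ) : R) = 1 := by
    rw [← Int.cast_mul, ← Units.val_mul, Int.units_mul_self, Units.val_one, Int.cast_one]
  rw [map_mul (rename τ), map_mul (rename τ), rename_vandermondeProd, hG τ, mul_assoc, mul_assoc,
    ← MvPolynomial.smul_eq_C_mul, map_smul, smul_eq_mul] at hrename
  simp only [LinearMap.comp_apply, LinearMap.mulLeft_apply]
  rw [← hrename, ← mul_assoc, hsign, one_mul, mul_assoc]

variable [IsDomain R] [IsAddTorsionFree R] {T : R →ₐ[k] Polynomial R} {V : ℤ → R} {s t : R}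

lemma HasContraction.iterMode_eq_gaussFactorial_mul (h : HasContraction T V s) (hst : s * t = 1)
    (ht : Function.Injective fun l : ℕ => t ^ l) (n : ℤ) {P : R}
    (hP : (iterTranslation T r P).IsSymmetric) : iterMode T V n r P = gaussFactorial s r *
      mvUmbral V (fun _ : Fin r => n - 2 * r + 2)
        (vandermondeProd R r * iterTranslation T r P * staircase R r) := by
  have hprod : ∏ i : Fin r, ∏ j ∈ Finset.Ioi i, contraction s i j =
      vandermondeProd R r * qVandermonde r s := by
    simp only [contraction, Finset.prod_mul_distrib, vandermondeProd, qVandermonde]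
  have halternating := (isAlternating_mvUmbral_mul V (n - 2 * r + 2) hP).qVandermonde_eq hst ht
  simp only [LinearMap.comp_apply, LinearMap.mulLeft_apply] at halternating
  rw [h.iterMode_eq, hprod, mul_right_comm, halternating]

lemma HasContraction.exists_mem_iterMode_eq (h : HasContraction T V s) (hst : s * t = 1)
    (ht : Function.Injective fun l : ℕ => t ^ l) (n : ℤ) {P : R}
    (hsymm : (iterTranslation T r P).IsSymmetric) {S : Subring R} (hP : P ∈ S)
    (hV : ∀ b, V b ∈ S) (hT : ∀ Q ∈ S, T Q ∈ (Polynomial.mapRingHom S.subtype).range) :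
    ∃ Q ∈ S, iterMode T V n r P = gaussFactorial s r * Q := by
  have hX (i : Fin r) : X i ∈ (MvPolynomial.map (σ := Fin r) S.subtype).range := ⟨X i, map_X _ _⟩
  have hvandermonde : vandermondeProd R r ∈ (MvPolynomial.map (σ := Fin r) S.subtype).range :=
    prod_mem fun i _ => prod_mem fun j _ => sub_mem (hX j) (hX i)
  have hstaircase : staircase R r ∈ (MvPolynomial.map (σ := Fin r) S.subtype).range :=
    ⟨staircase S r, map_monomial _ _ _⟩
  exact ⟨_, mvUmbral_mem hV _ (mul_mem (mul_mem hvandermonde (iterTranslation_mem hT r hP))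
    hstaircase), h.iterMode_eq_gaussFactorial_mul hst ht n hsymm⟩

end Divisibility

/-! ### Quantum integers -/

lemma qq_ne_zero : qq ≠ 0 := RatFunc.X_ne_zero

lemma qq_pow_injective : Function.Injective fun n : ℕ => qq ^ n := by
  intro m n hmn
  have hpoly : algebraMap (Polynomial ℚ) Fq (Polynomial.X ^ m) =
      algebraMap (Polynomial ℚ) Fq (Polynomial.X ^ n) := by
    simpa [qq, RatFunc.algebraMap_X] using hmn
  simpa using congrArg Polynomial.natDegree (RatFunc.algebraMap_injective ℚ hpoly)

lemma qq_pow_succ_sub_inv_ne_zero (k : ℕ) : qq ^ (k + 1) - qq⁻¹ ^ (k + 1) ≠ 0 := by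
  intro h
  have hpow : qq ^ (2 * (k + 1)) = qq ^ 0 := by
    rw [two_mul, pow_add, pow_zero]
    nth_rewrite 2 [sub_eq_zero.1 h]
    rw [← mul_pow, mul_inv_cancel₀ qq_ne_zero, one_pow]
  exact absurd (qq_pow_injective hpow) (by omega)

lemma qq_sub_inv_ne_zero : qq - qq⁻¹ ≠ 0 := by
  simpa using qq_pow_succ_sub_inv_ne_zero 0

lemma qfact_ne_zero (r : ℕ) : qfact r ≠ 0 :=
  Finset.prod_ne_zero_iff.2 fun k _ =>
    div_ne_zero (qq_pow_succ_sub_inv_ne_zero k) qq_sub_inv_ne_zero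

lemma exists_gaussFactorial_eq {x : Fq} (hx : x = qq ∨ x = qq⁻¹) (r : ℕ) :
    ∃ e : ℤ, gaussFactorial (x ^ 2) r = qq ^ e * qfact r := by
  rcases hx with rfl | rfl
  · exact ⟨_, (gaussFactorial_sq qq_ne_zero qq_sub_inv_ne_zero r).trans
      (congrArg (· * _) (zpow_natCast _ _).symm)⟩
  · refine ⟨-(∑ j ∈ Finset.range r, j : ℕ), ?_⟩
    rw [gaussFactorial_sq (inv_ne_zero qq_ne_zero), zpow_neg, zpow_natCast, inv_pow, qfact]
    · refine congrArg _ (Finset.prod_congr rfl fun j _ => ?_)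
      rw [inv_inv, ← neg_div_neg_eq, neg_sub, neg_sub]
    · rw [inv_inv, ← neg_sub]
      exact neg_ne_zero.2 qq_sub_inv_ne_zero

/-! ### The integral form of the ring of symmetric functions -/

/-- The subring `ℤ[q, q⁻¹][h₁, h₂, …]` of `Λ_F`. -/
def integralForm : Subring LamF := Subring.closure (Set.range hhF ∪ {C qq, C qq⁻¹})

lemma hhF_mem_integralForm (k : ℕ) : hhF k ∈ integralForm :=
  Subring.subset_closure (Or.inl ⟨k, rfl⟩)

lemma C_qq_mem_integralForm : C qq ∈ integralForm :=
  Subring.subset_closure (by simp)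

lemma C_qq_inv_mem_integralForm : C qq⁻¹ ∈ integralForm :=
  Subring.subset_closure (by simp)

lemma qq_zpow_smul_mem_integralForm (k : ℤ) {P : LamF} (hP : P ∈ integralForm) :
    qq ^ k • P ∈ integralForm := by
  rw [MvPolynomial.smul_eq_C_mul]
  refine mul_mem ?_ hP
  cases k with
  | ofNat k => simpa using pow_mem C_qq_mem_integralForm k
  | negSucc k =>
    rw [zpow_negSucc, ← inv_pow, map_pow]
    exact pow_mem C_qq_inv_mem_integralForm _

/-- The power series with coefficients in the integral form. -/
abbrev integralSeries : Subring (PowerSeries LamF) :=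
  (PowerSeries.map integralForm.subtype).range

/-- The polynomials with coefficients in the integral form. -/
abbrev integralPolynomials : Subring (Polynomial LamF) :=
  (Polynomial.mapRingHom integralForm.subtype).range

lemma expSeries_one_integral : expSeries (fun _ => 1) ∈ integralSeries :=
  mem_range_map_subtype_iff.2 fun k => by
    rw [coeff_expSeries]
    exact hhF_mem_integralForm k

lemma expSeries_neg_one_integral : expSeries (fun _ => -1) ∈ integralSeries :=
  mem_range_map_subtype_of_mul_eq_one expSeries_one_integral
    (hasLogDeriv_expSeries _).constantCoeff_eq_one (by simp [expSeries_mul, expSeries_zero])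

lemma expSeries_rescale_integral {c : ℕ → Fq} (hc : expSeries c ∈ integralSeries) {a : Fq}
    (ha : C a ∈ integralForm) : expSeries (fun n => c n * a ^ n) ∈ integralSeries :=
  rescale_expSeries c a ▸ rescale_mem_range_map_subtype hc ha

lemma expSeries_plus_integral :
    expSeries (fun n => (1 + qq ^ (2 * n)) * qq⁻¹ ^ n) ∈ integralSeries := by
  have hmul := mul_mem (expSeries_rescale_integral expSeries_one_integral C_qq_inv_mem_integralForm)
    (expSeries_rescale_integral expSeries_one_integral C_qq_mem_integralForm)
  rw [expSeries_mul] at hmul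
  convert hmul using 3 with n
  have := qq_ne_zero
  rw [inv_pow]
  field_simp
  ring

lemma expSeries_minus_integral : expSeries (fun n => -(1 + qq ^ (2 * n))) ∈ integralSeries := by
  have hmul := mul_mem expSeries_neg_one_integral (expSeries_rescale_integral (a := qq ^ 2)
    expSeries_neg_one_integral (by simpa using pow_mem C_qq_mem_integralForm 2))
  rw [expSeries_mul] at hmul
  convert hmul using 3 with n
  rw [← pow_mul]
  ring

/-! ### Translating exponential series -/

/-- The coefficients, indexed by `ℤ`, of the creation part `exp (∑ v_n p_n tⁿ / n)` of a current. -/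
def creationCoeff (v : ℕ → Fq) (b : ℤ) : LamF := intCoeff b (expSeries v)

lemma creationCoeff_eq (v : ℕ → Fq) (b : ℤ) :
    creationCoeff v b = if 0 ≤ b then genFamF v b.toNat else 0 := by
  rw [creationCoeff, intCoeff_apply, coeff_expSeries]

lemma hasContraction_translation {c v : ℕ → Fq} {s : Fq} (h : ∀ n, v n * c n = -(1 + s ^ n)) :
    HasContraction (translation c) (creationCoeff v) (C s) where
  map_scalar := translation_C c s
  map_coeff b := by
    have hseries := map_translation_expSeries c v
      (((HasLogDeriv.one_sub_C_mul_X Polynomial.X).mul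
        (HasLogDeriv.one_sub_C_mul_X (Polynomial.C (C s) * Polynomial.X))).congr_logDeriv (by
          ext1 n
          rw [PowerSeries.coeff_mk, map_add, PowerSeries.coeff_mk, PowerSeries.coeff_mk, h]
          simp only [map_neg, map_add, map_one, map_pow]
          ring))
    have hexpand : PowerSeries.map Polynomial.C (expSeries v) *
        ((1 - PowerSeries.C Polynomial.X * PowerSeries.X) *
          (1 - PowerSeries.C (Polynomial.C (C s) * Polynomial.X) * PowerSeries.X)) =
        PowerSeries.map Polynomial.C (expSeries v)
          - PowerSeries.C (Polynomial.C (1 + C s) * Polynomial.X) *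
            (PowerSeries.map Polynomial.C (expSeries v) * PowerSeries.X)
          + PowerSeries.C (Polynomial.C (C s) * Polynomial.X ^ 2) *
            (PowerSeries.map Polynomial.C (expSeries v) * PowerSeries.X * PowerSeries.X) := by
      simp only [map_mul, map_add, map_one, map_pow]
      ring
    have hcoeff := congrArg (intCoeff b) (hseries.trans hexpand)
    rw [map_add, map_sub, intCoeff_C_mul, intCoeff_C_mul, intCoeff_mul_X, intCoeff_mul_X,
      intCoeff_mul_X, intCoeff_map, intCoeff_map, intCoeff_map, intCoeff_map] at hcoeff
    refine hcoeff.trans ?_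
    simp only [creationCoeff, map_mul]
    rw [show b - 1 - 1 = b - 2 by ring]
    ring

lemma translation_integral_of_hhF {c : ℕ → Fq}
    (hh : ∀ k, translation c (hhF k) ∈ integralPolynomials) {P : LamF} (hP : P ∈ integralForm) :
    translation c P ∈ integralPolynomials := by
  have hle : integralForm ≤ Subring.comap (translation c : LamF →+* _) integralPolynomials := by
    refine Subring.closure_le.2 ?_
    rintro _ (⟨k, rfl⟩ | rfl | rfl)
    · exact hh k
    · exact ⟨Polynomial.C ⟨_, C_qq_mem_integralForm⟩, by simp⟩
    · exact ⟨Polynomial.C ⟨_, C_qq_inv_mem_integralForm⟩, by simp⟩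
  exact hle hP

lemma translation_integral {c : ℕ → Fq} {K : PowerSeries (Polynomial LamF)}
    (hK : HasLogDeriv K (PowerSeries.mk fun n =>
      Polynomial.C (C (c (n + 1))) * Polynomial.X ^ (n + 1)))
    (hKint : K ∈ (PowerSeries.map integralPolynomials.subtype).range) {P : LamF}
    (hP : P ∈ integralForm) : translation c P ∈ integralPolynomials := by
  refine translation_integral_of_hhF (fun k => ?_) hP
  have hcoeff := congrArg (PowerSeries.coeff k)
    (map_translation_expSeries c (fun _ => 1) (by simpa only [one_mul] using hK))
  rw [PowerSeries.coeff_map, PowerSeries.coeff_mul, coeff_expSeries] at hcoeff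
  refine (congrArg (· ∈ integralPolynomials) hcoeff).mpr
    (sum_mem fun p _ => mul_mem ?_ (mem_range_map_subtype_iff.1 hKint p.2))
  rw [PowerSeries.coeff_map, coeff_expSeries]
  exact ⟨Polynomial.C ⟨hhF p.1, hhF_mem_integralForm _⟩, by simp [hhF]⟩

lemma translation_one_integral {P : LamF} (hP : P ∈ integralForm) :
    translation (fun _ => 1) P ∈ integralPolynomials := by
  refine translation_integral (by simpa using HasLogDeriv.mk_pow Polynomial.X)
    (mem_range_map_subtype_iff.2 fun n => ?_) hP
  rw [PowerSeries.coeff_mk]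
  have hX : Polynomial.X ∈ integralPolynomials := ⟨Polynomial.X, by simp⟩
  exact pow_mem hX n

lemma translation_neg_integral {P : LamF} (hP : P ∈ integralForm) :
    translation (fun n => -qq⁻¹ ^ n) P ∈ integralPolynomials := by
  have hb : Polynomial.C (C qq⁻¹) * Polynomial.X ∈ integralPolynomials :=
    mul_mem ⟨Polynomial.C ⟨_, C_qq_inv_mem_integralForm⟩, by simp⟩ ⟨Polynomial.X, by simp⟩
  have hint : 1 - PowerSeries.C (Polynomial.C (C qq⁻¹) * Polynomial.X) * PowerSeries.X ∈
      (PowerSeries.map integralPolynomials.subtype).range :=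
    sub_mem (one_mem _) (mul_mem ⟨PowerSeries.C ⟨_, hb⟩, by simp⟩ ⟨PowerSeries.X, by simp⟩)
  refine translation_integral ((HasLogDeriv.one_sub_C_mul_X _).congr_logDeriv ?_) hint hP
  ext1 n
  simp only [PowerSeries.coeff_mk, mul_pow, map_neg, map_pow]
  ring

/-! ### Schur functions span the integral form -/

lemma sum_sq_lt_sum_sq_straighten {l : ℕ} {μ : Fin l → ℤ} (hμ : Antitone μ)
    {σ : Equiv.Perm (Fin l)} (hσ : σ ≠ 1) :
    ∑ i, μ i ^ 2 < ∑ i, (μ (σ i) - ((σ i : ℕ) : ℤ) + ((i : ℕ) : ℤ)) ^ 2 := by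
  have hanti : Antivary μ (fun i : Fin l => ((i : ℕ) : ℤ)) := fun i j hij =>
    hμ (Fin.le_def.2 (Int.ofNat_le.1 hij.le))
  have hrearrange := hanti.sum_mul_le_sum_comp_perm_mul (σ := σ)
  have hpos : 0 < ∑ i : Fin l, (((i : ℕ) : ℤ) - ((σ i : ℕ) : ℤ)) ^ 2 := by
    obtain ⟨i, hi⟩ : ∃ i, σ i ≠ i := by
      contrapose! hσ
      exact Equiv.ext hσ
    refine Finset.sum_pos' (fun _ _ => sq_nonneg _) ⟨i, Finset.mem_univ _, ?_⟩
    have hne : ((i : ℕ) : ℤ) - ((σ i : ℕ) : ℤ) ≠ 0 := fun h => hi (Fin.ext (by omega))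
    positivity
  have hexpand : ∑ i, (μ (σ i) - ((σ i : ℕ) : ℤ) + ((i : ℕ) : ℤ)) ^ 2 = ∑ i, μ i ^ 2 +
      2 * (∑ i, μ (σ i) * ((i : ℕ) : ℤ) - ∑ i, μ i * ((i : ℕ) : ℤ)) +
        ∑ i : Fin l, (((i : ℕ) : ℤ) - ((σ i : ℕ) : ℤ)) ^ 2 := by
    rw [← Equiv.sum_comp σ fun i => μ i ^ 2, ← Equiv.sum_comp σ fun i => μ i * ((i : ℕ) : ℤ),
      ← Finset.sum_sub_distrib, Finset.mul_sum, ← Finset.sum_add_distrib,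
      ← Finset.sum_add_distrib]
    exact Finset.sum_congr rfl fun i _ => by ring
  linarith

lemma sum_straighten {l : ℕ} (μ : Fin l → ℤ) (σ : Equiv.Perm (Fin l)) :
    ∑ i, (μ (σ i) - ((σ i : ℕ) : ℤ) + ((i : ℕ) : ℤ)) = ∑ i, μ i := by
  rw [Finset.sum_add_distrib, Finset.sum_sub_distrib, Equiv.sum_comp σ μ,
    Equiv.sum_comp σ fun i : Fin l => ((i : ℕ) : ℤ), sub_add_cancel]

lemma schurF_eq_prod_add {l : ℕ} (ρ : Fin l → ℤ) : schurF ρ = ∏ i, hZF (ρ i) +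
    ∑ σ ∈ Finset.univ.erase (1 : Equiv.Perm (Fin l)), (Equiv.Perm.sign σ : ℤ) •
      ∏ i, hZF (ρ (σ i) - ((σ i : ℕ) : ℤ) + ((i : ℕ) : ℤ)) := by
  rw [schurF, Matrix.det_apply, ← Finset.add_sum_erase _ _ (Finset.mem_univ 1)]
  simp [Units.smul_def]

lemma prod_hZF_mem {A : Type*} [SetLike A LamF] [ZeroMemClass A LamF] {L : A} {l : ℕ}
    {ρ : Fin l → ℤ} (h : ∀ ν : Fin l → ℕ, (∀ i, (ν i : ℤ) = ρ i) → ∏ i, hhF (ν i) ∈ L) :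
    ∏ i, hZF (ρ i) ∈ L := by
  by_cases hρ : ∀ i, 0 ≤ ρ i
  · simpa [hZF, hρ] using h (fun i => (ρ i).toNat) fun i => Int.toNat_of_nonneg (hρ i)
  · push Not at hρ
    obtain ⟨i, hi⟩ := hρ
    rw [Finset.prod_eq_zero (Finset.mem_univ i) (if_neg hi.not_ge)]
    exact zero_mem L

/-- The Jacobi–Trudi expansion is unitriangular: by the rearrangement inequality its off-diagonal
terms `h_ν` have the same `∑ νᵢ` as `μ` and a larger `∑ νᵢ²`. -/
lemma prod_hhF_mem_of_schurF_mem {L : AddSubgroup LamF} {l : ℕ}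
    (hL : ∀ lam : Fin l → ℕ, Antitone lam → schurF (fun a => (lam a : ℤ)) ∈ L)
    (μ : Fin l → ℕ) : ∏ i, hhF (μ i) ∈ L := by
  induction hN : (∑ i, μ i) ^ 2 - ∑ i, μ i ^ 2 using Nat.strong_induction_on generalizing μ with
  | _ N ih =>
    wlog hμ : Antitone μ generalizing μ
    · let τ : Equiv.Perm (Fin l) := Fin.revPerm.trans (Tuple.sort μ)
      rw [← Equiv.prod_comp τ fun i => hhF (μ i)]
      refine this (fun i => μ (τ i)) ?_ ((Tuple.monotone_sort μ).comp_antitone Fin.rev_anti)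
      rw [Equiv.sum_comp τ μ, Equiv.sum_comp τ fun i => μ i ^ 2, hN]
    have hμ' : Antitone fun i => (μ i : ℤ) := fun i j hij => Int.ofNat_le.2 (hμ hij)
    have hsplit := schurF_eq_prod_add fun i => (μ i : ℤ)
    have hdiag : ∏ i, hZF (μ i) = ∏ i, hhF (μ i) := by simp [hZF]
    rw [← hdiag, eq_sub_of_add_eq hsplit.symm]
    refine sub_mem (hL μ hμ) (sum_mem fun σ hσ => zsmul_mem (prod_hZF_mem fun ν hν => ?_) _)
    have hsum : ∑ i, ν i = ∑ i, μ i := by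
      have heq := sum_straighten (fun i => (μ i : ℤ)) σ
      simp only [← hν] at heq
      exact_mod_cast heq
    have hsq : ∑ i, μ i ^ 2 < ∑ i, ν i ^ 2 := by
      have hlt := sum_sq_lt_sum_sq_straighten hμ' (Finset.ne_of_mem_erase hσ)
      simp only [← hν] at hlt
      exact_mod_cast hlt
    refine ih _ ?_ ν rfl
    have hle := Finset.sum_sq_le_sq_sum_of_nonneg (s := Finset.univ) fun i _ => (ν i).zero_le
    rw [hsum] at hle ⊢
    omega

lemma integralForm_subset_of_schurF_mem {L : AddSubgroup LamF}
    (hL : ∀ (k : ℤ) (l : ℕ) (lam : Fin l → ℕ), Antitone lam →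
      qq ^ k • schurF (fun a => (lam a : ℤ)) ∈ L) {P : LamF} (hP : P ∈ integralForm) : P ∈ L := by
  have hmonomial (k : ℤ) (μ : List ℕ) : qq ^ k • (μ.map hhF).prod ∈ L := by
    rw [← Fin.prod_univ_fun_getElem]
    exact prod_hhF_mem_of_schurF_mem
      (L := L.comap (DistribSMul.toAddMonoidHom LamF (qq ^ k))) (hL k _) _
  rw [integralForm, Subring.mem_closure_iff] at hP
  refine AddSubgroup.closure_le L |>.2 (fun P hP => ?_) hP
  obtain ⟨k, μ, rfl⟩ : ∃ (k : ℤ) (μ : List ℕ), P = qq ^ k • (μ.map hhF).prod := by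
    induction hP using Submonoid.closure_induction with
    | mem P hP =>
      rcases hP with ⟨n, rfl⟩ | rfl | rfl
      · exact ⟨0, [n], by simp⟩
      · exact ⟨1, [], by simp [MvPolynomial.smul_eq_C_mul]⟩
      · exact ⟨-1, [], by simp [MvPolynomial.smul_eq_C_mul]⟩
    | one => exact ⟨0, [], by simp⟩
    | mul P Q _ _ hP hQ =>
      obtain ⟨k, μ, rfl⟩ := hP
      obtain ⟨k', ν, rfl⟩ := hQ
      refine ⟨k + k', μ ++ ν, ?_⟩
      rw [List.map_append, List.prod_append, zpow_add₀ qq_ne_zero, smul_mul_smul_comm]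
  exact hmonomial k μ

lemma schurF_mem_integralForm {l : ℕ} (ρ : Fin l → ℤ) : schurF ρ ∈ integralForm := by
  rw [schurF, Matrix.det_apply]
  refine sum_mem fun σ _ => ?_
  rw [Units.smul_def]
  exact zsmul_mem (prod_hZF_mem fun ν _ => prod_mem fun i _ => hhF_mem_integralForm _) _

lemma mem_schurLattice_iff {w : W} : w ∈ SchurLattice ↔ ∀ m, w m ∈ integralForm := by
  refine ⟨fun hw m => ?_, fun h => ?_⟩
  · induction hw using AddSubgroup.closure_induction with
    | mem w hw =>
      obtain ⟨k, m', l, lam, -, rfl⟩ := hw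
      rw [Finsupp.smul_apply, Finsupp.single_apply]
      split_ifs
      · exact qq_zpow_smul_mem_integralForm k (schurF_mem_integralForm _)
      · simp
    | zero => exact zero_mem _
    | add v w _ _ hv hw => exact add_mem hv hw
    | neg w _ hw => exact neg_mem hw
  · rw [← Finsupp.sum_single w]
    refine sum_mem fun m _ => integralForm_subset_of_schurF_mem
      (L := SchurLattice.comap (Finsupp.singleAddHom m)) (fun k l lam hlam => ?_) (h m)
    exact AddSubgroup.subset_closure ⟨k, m, l, lam, hlam, (Finsupp.smul_single ..).symm⟩

/-! ### Divided powers of integral currents -/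

/-- The current with annihilation part `p_n ↦ p_n + c_n uⁿ` and creation part
`exp (∑ v_n p_n zⁿ / n)` is integral, and two copies of it contract with ratio `x²`, where
`x = q^{±1}`. -/
structure IsIntegralCurrent (c v : ℕ → Fq) (x : Fq) : Prop where
  ratio_eq : x = qq ∨ x = qq⁻¹
  v_mul_c (n : ℕ) : v n * c n = -(1 + (x ^ 2) ^ n)
  expSeries_mem : expSeries v ∈ integralSeries
  translation_mem {P : LamF} (hP : P ∈ integralForm) : translation c P ∈ integralPolynomials

lemma isIntegralCurrent_plus : IsIntegralCurrent (fun n => -qq⁻¹ ^ n)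
    (fun n => (1 + qq ^ (2 * n)) * qq⁻¹ ^ n) qq⁻¹ where
  ratio_eq := Or.inr rfl
  v_mul_c n := by
    have hcancel : (qq * qq⁻¹) ^ n = 1 := by rw [mul_inv_cancel₀ qq_ne_zero, one_pow]
    linear_combination -((qq * qq⁻¹) ^ n + 1) * hcancel
  expSeries_mem := expSeries_plus_integral
  translation_mem := translation_neg_integral

lemma isIntegralCurrent_minus :
    IsIntegralCurrent (fun _ => 1) (fun n => -(1 + qq ^ (2 * n))) qq where
  ratio_eq := Or.inl rfl
  v_mul_c n := by rw [mul_one, pow_mul]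
  expSeries_mem := expSeries_minus_integral
  translation_mem := translation_one_integral

lemma inv_qfact_smul_iterMode_mem {c v : ℕ → Fq} {x : Fq} (h : IsIntegralCurrent c v x) (n : ℤ)
    (r : ℕ) {P : LamF} (hP : P ∈ integralForm) :
    (qfact r)⁻¹ • iterMode (translation c) (creationCoeff v) n r P ∈ integralForm := by
  have hx : x ≠ 0 := by
    rcases h.ratio_eq with rfl | rfl
    exacts [qq_ne_zero, inv_ne_zero qq_ne_zero]
  have hst : (C (x ^ 2) : LamF) * C (x⁻¹ ^ 2) = 1 := by
    rw [← C_mul, ← mul_pow, mul_inv_cancel₀ hx, one_pow, C_1]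
  have ht : Function.Injective fun l : ℕ => (C (x⁻¹ ^ 2) : LamF) ^ l := by
    intro l l' hl
    have hpow : (x⁻¹ ^ 2) ^ l = (x⁻¹ ^ 2) ^ l' := C_injective _ _ (by simpa only [C_pow] using hl)
    have hqq : qq ^ (2 * l) = qq ^ (2 * l') := by
      rcases h.ratio_eq with rfl | rfl
      · simpa only [← pow_mul, inv_pow, inv_inj] using hpow
      · simpa only [← pow_mul, inv_inv] using hpow
    exact Nat.eq_of_mul_eq_mul_left two_pos (qq_pow_injective hqq)
  obtain ⟨Q, hQ, hiter⟩ := (hasContraction_translation h.v_mul_c).exists_mem_iterMode_eq hst ht n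
    (isSymmetric_iterTranslation c r P) hP (fun b => intCoeff_mem h.expSeries_mem b)
    fun Q hQ => h.translation_mem hQ
  obtain ⟨e, he⟩ := exists_gaussFactorial_eq h.ratio_eq r
  rw [hiter, gaussFactorial_map, he, ← MvPolynomial.smul_eq_C_mul, smul_smul, mul_left_comm,
    inv_mul_cancel₀ (qfact_ne_zero r), mul_one]
  exact qq_zpow_smul_mem_integralForm e hQ

/-! ### Operators on the Fock space -/

/-- The operator `P e^{mα} ↦ φ_m(P) e^{(m+d)α}`. -/
def weightOp (d : ℤ) (φ : ℤ → LamF →ₗ[Fq] LamF) : W →ₗ[Fq] W :=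
  Finsupp.lsum Fq fun m => Finsupp.lsingle (m + d) ∘ₗ φ m

lemma weightOp_apply (d : ℤ) (φ : ℤ → LamF →ₗ[Fq] LamF) (w : W) :
    weightOp d φ w = w.sum fun m P => Finsupp.single (m + d) (φ m P) := rfl

lemma weightOp_zero_id : weightOp 0 (fun _ => LinearMap.id) = LinearMap.id := by
  ext1 m
  ext1 P
  simp [weightOp]

lemma weightOp_comp (d d' : ℤ) (φ ψ : ℤ → LamF →ₗ[Fq] LamF) :
    weightOp d φ ∘ₗ weightOp d' ψ = weightOp (d' + d) fun m => φ (m + d') ∘ₗ ψ m := by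
  refine Finsupp.lhom_ext fun m P => ?_
  simp [weightOp, add_assoc]

lemma smul_weightOp (a : Fq) (d : ℤ) (φ : ℤ → LamF →ₗ[Fq] LamF) :
    a • weightOp d φ = weightOp d fun m => a • φ m := by
  refine Finsupp.lhom_ext fun m P => ?_
  simp [weightOp]

lemma weightOp_mem_schurLattice {d : ℤ} {φ : ℤ → LamF →ₗ[Fq] LamF}
    (hφ : ∀ m, ∀ P ∈ integralForm, φ m P ∈ integralForm) {w : W} (hw : w ∈ SchurLattice) :
    weightOp d φ w ∈ SchurLattice := by
  rw [weightOp_apply]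
  refine sum_mem fun m _ => mem_schurLattice_iff.2 fun m' => ?_
  rw [Finsupp.single_apply]
  split_ifs
  exacts [hφ m _ (mem_schurLattice_iff.1 hw m), zero_mem _]

lemma exists_weightOp_mode_pow_eq (T : LamF →ₐ[Fq] Polynomial LamF) (V : ℤ → LamF) {d : ℤ}
    (g : ℤ → ℤ) {K : ℤ → ℤ} (hK : ∀ m, K (m + d) = K m - 2) (r : ℕ) : ∃ e : ℤ → ℤ,
    weightOp d (fun m => qq ^ g m • mode T V (K m)) ^ r =
      weightOp (r * d) fun m => qq ^ e m • iterMode T V (K m) r := by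
  have hKr (r : ℕ) (m : ℤ) : K (m + r * d) = K m - 2 * r := by
    induction r with
    | zero => simp
    | succ r ih =>
      rw [show m + ((r + 1 : ℕ) : ℤ) * d = m + r * d + d by push_cast; ring, hK, ih]
      push_cast
      ring
  induction r with
  | zero => exact ⟨fun _ => 0, by simp [iterMode, weightOp_zero_id, Module.End.one_eq_id]⟩
  | succ r ih =>
    obtain ⟨e, he⟩ := ih
    refine ⟨fun m => e m + g (m + r * d), ?_⟩
    rw [pow_succ', he, Module.End.mul_eq_comp, weightOp_comp]
    simp only [hKr, iterMode, LinearMap.smul_comp, LinearMap.comp_smul, smul_smul,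
      zpow_add₀ qq_ne_zero]
    congr 1
    push_cast
    ring

lemma divpow_weightOp_mem_schurLattice {c v : ℕ → Fq} {x : Fq} (h : IsIntegralCurrent c v x)
    {d : ℤ} (g : ℤ → ℤ) {K : ℤ → ℤ} (hK : ∀ m, K (m + d) = K m - 2) (r : ℕ) {w : W}
    (hw : w ∈ SchurLattice) :
    divpow (weightOp d fun m => qq ^ g m • mode (translation c) (creationCoeff v) (K m)) r w ∈
      SchurLattice := by
  obtain ⟨e, he⟩ := exists_weightOp_mode_pow_eq (translation c) (creationCoeff v) g hK r
  rw [divpow, ← Module.End.pow_apply, he, ← LinearMap.smul_apply, smul_weightOp]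
  refine weightOp_mem_schurLattice (fun m P hP => ?_) hw
  rw [LinearMap.smul_apply, LinearMap.smul_apply, smul_comm]
  exact qq_zpow_smul_mem_integralForm _ (inv_qfact_smul_iterMode_mem h _ r hP)

lemma mode_translation_eq_sum (c : ℕ → Fq) (V : ℤ → LamF) (n : ℤ) (P : LamF) :
    mode (translation c) V n P =
      ∑ j ∈ Finset.range (wboundF P + 1), V (n + j) * DopF (genFamF c j) P := by
  rw [mode_apply, umbral_apply, Polynomial.sum_over_range' _ (fun j => zero_mul (V (n + j))) _
    (Nat.lt_succ_of_le (natDegree_translation_le c P))]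
  exact Finset.sum_congr rfl fun j _ => by rw [DopF_genFamF, mul_comm]

lemma Xp_eq_weightOp (i n : ℤ) : Xp i n = weightOp 1 fun m =>
    mode (translation fun n => -qq⁻¹ ^ n)
      (creationCoeff fun n => (1 + qq ^ (2 * n)) * qq⁻¹ ^ n) (-n - 1 - 2 * m - i) := by
  refine funext fun w => Finsupp.sum_congr fun m _ => ?_
  change _ = Finsupp.single (m + 1) (mode _ _ _ (w m))
  simp only [mode_translation_eq_sum, creationCoeff_eq]
  refine congrArg _ (Finset.sum_congr rfl fun j _ => ?_)
  rw [show -n - 1 - 2 * m - i + (j : ℤ) = (j : ℤ) - n - 1 - 2 * m - i by ring]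
  rfl

lemma Xm_eq_weightOp (i n : ℤ) : Xm i n = weightOp (-1) fun m =>
    mode (translation fun _ => 1) (creationCoeff fun n => -(1 + qq ^ (2 * n)))
      (2 * m + i - n - 1) := by
  refine funext fun w => Finsupp.sum_congr fun m _ => ?_
  change _ = Finsupp.single (m + -1) (mode _ _ _ (w m))
  simp only [mode_translation_eq_sum, creationCoeff_eq]
  refine congrArg _ (Finset.sum_congr rfl fun j _ => ?_)
  rw [show 2 * m + i - n - 1 + (j : ℤ) = (j : ℤ) + 2 * m + i - n - 1 by ring]
  rfl

lemma qd_eq_weightOp (i ε : ℤ) :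
    qd i ε = weightOp 0 fun m => qq ^ (ε * (2 * m + i)) • LinearMap.id := by
  refine funext fun w => Finsupp.sum_congr fun m _ => ?_
  simp

lemma qd_zero (i : ℤ) : qd i 0 = id := by
  rw [qd_eq_weightOp]
  simpa using congrArg DFunLike.coe weightOp_zero_id

lemma qd_comp_weightOp_comp_qd (i a b d : ℤ) (φ : ℤ → LamF →ₗ[Fq] LamF) :
    qd i a ∘ weightOp d φ ∘ qd i b =
      weightOp d fun m => qq ^ (a * (2 * (m + d) + i) + b * (2 * m + i)) • φ m := by
  rw [qd_eq_weightOp, qd_eq_weightOp, ← LinearMap.coe_comp, ← LinearMap.coe_comp, weightOp_comp,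
    weightOp_comp]
  simp [smul_smul, zpow_add₀ qq_ne_zero, LinearMap.smul_comp, LinearMap.comp_smul, mul_comm]

theorem schur_lattice_chevalley_divided_powers_general (i n a b : ℤ) (r : ℕ) {w : W}
    (hw : w ∈ SchurLattice) :
    divpow (qd i a ∘ Xp i n ∘ qd i b) r w ∈ SchurLattice ∧
      divpow (qd i a ∘ Xm i n ∘ qd i b) r w ∈ SchurLattice := by
  rw [Xp_eq_weightOp, Xm_eq_weightOp, qd_comp_weightOp_comp_qd, qd_comp_weightOp_comp_qd]
  exact ⟨divpow_weightOp_mem_schurLattice isIntegralCurrent_plus _ (fun m => by ring) r hw,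
    divpow_weightOp_mem_schurLattice isIntegralCurrent_minus _ (fun m => by ring) r hw⟩

/-- invariance of the Schur lattice under all divided powers of the
Chevalley generators `e₁ = X₀⁺`, `f₁ = X₀⁻`, `e₀ = X₁⁻ ∘ q^{−∂}`, `f₀ = q^∂ ∘ X₋₁⁺`
of the integral form of `U_q(ŝl₂)`: for `i ∈ {0,1}` and `r ≥ 1`,
`e₁^{(r)}(ℒ_i) ⊆ ℒ_i`, `f₁^{(r)}(ℒ_i) ⊆ ℒ_i`, `e₀^{(r)}(ℒ_i) ⊆ ℒ_i`,
`f₀^{(r)}(ℒ_i) ⊆ ℒ_i`. -/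
theorem schur_lattice_chevalley_divided_powers (i : ℤ) (hi : i = 0 ∨ i = 1) (r : ℕ)
    (hr : 1 ≤ r) (w : W) (hw : w ∈ SchurLattice) :
    divpow (che1 i) r w ∈ SchurLattice ∧ divpow (chf1 i) r w ∈ SchurLattice ∧
    divpow (che0 i) r w ∈ SchurLattice ∧ divpow (chf0 i) r w ∈ SchurLattice := by
  have hgen (n a b : ℤ) := schur_lattice_chevalley_divided_powers_general i n a b r hw
  have he₁ := (hgen 0 0 0).1
  have hf₁ := (hgen 0 0 0).2
  have he₀ := (hgen 1 0 (-1)).2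
  have hf₀ := (hgen (-1) 1 0).1
  rw [qd_zero] at he₁ hf₁ he₀ hf₀
  exact ⟨he₁, hf₁, he₀, hf₀⟩
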